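/- arXiv:1005.0448 — 10 statements merged into one kernel-verified Lean document; each statement's English description precedes it below -/
import Mathlib

section
/- Let F be an algebraically closed field, let V and W be finite-dimensional F-vector spaces with dim V = k and dim W = n, and let ψ₁, ψ₂ : W → V* be surjective linear maps to the dual space of V. Consider the subspace S = {φ ∈ Hom_F(V, W) : ψ₁∘φ and ψ₂∘φ are both symmetric} of Hom_F(V, W). Then dim S = kn − 2·(k(k−1)/2) if and only if there do not exist a 2-dimensional subspace V′ ⊆ V and scalars λ₁, λ₂ ∈ F, not both zero, such that λ₁·(ψ₁(w))(v) + λ₂·(ψ₂(w))(v) = 0 for all v ∈ V′ and all w ∈ W. -/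
open Module

theorem skew_of_alt {F V : Type*} [Field F] [AddCommGroup V] [Module F V]
    (A : Dual F V →ₗ[F] V) (hA : ∀ x : Dual F V, x (A x) = 0) (x y : Dual F V) : x (A y) = - y (A x) := by
  have h := hA (x + y)
  simp only [map_add, LinearMap.add_apply, hA] at h
  linear_combination h

theorem even_rank {F V : Type*} [Field F] [AddCommGroup V] [Module F V] [FiniteDimensional F V]
    (m : ℕ) : ∀ (A : Dual F V →ₗ[F] V) (_ : ∀ x : Dual F V, x (A x) = 0)
    (_ : finrank F (LinearMap.range A) = m), Even m := by
  induction m using Nat.strong_induction_on with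
  | _ m ih =>
  intro A hA hm
  by_cases h0 : A = 0
  · rw [h0, LinearMap.range_zero, finrank_bot] at hm
    subst hm
    exact Even.zero
  obtain ⟨x, hx⟩ : ∃ x, A x ≠ 0 := by
    by_contra! h
    exact h0 (LinearMap.ext h)
  obtain ⟨y, hy⟩ : ∃ y : Dual F V, y (A x) ≠ 0 := by
    by_contra! h
    exact hx ((forall_dual_apply_eq_zero_iff F _).1 h)
  have sk := skew_of_alt A hA
  set c := y (A x) with hc
  let A' : Dual F V →ₗ[F] V := A - c⁻¹ • ((y.comp A).smulRight (A x) - (x.comp A).smulRight (A y))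
  have hA'z : ∀ z, A' z = A z - c⁻¹ • (y (A z) • A x - x (A z) • A y) := fun z => by simp [A']
  have hA' : ∀ z : Dual F V, z (A' z) = 0 := by
    intro z
    rw [hA'z]
    simp only [map_sub, map_smul, smul_eq_mul, hA]
    rw [sk z x, sk z y]
    ring
  have hxy : x (A y) = -c := sk x y
  have kx : ∀ z, x (A' z) = 0 := by
    intro z
    rw [hA'z]
    simp only [map_sub, map_smul, smul_eq_mul, hA, hxy]
    field_simp
    ring
  have ky : ∀ z, y (A' z) = 0 := by
    intro z
    rw [hA'z]
    simp only [map_sub, map_smul, smul_eq_mul, hA, ← hc]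
    field_simp
    ring
  have hli : LinearIndependent F ![A x, A y] := by
    rw [LinearIndependent.pair_iff]
    intro s t hst
    have h1 := congrArg x hst
    have h2 := congrArg y hst
    simp only [map_add, map_smul, smul_eq_mul, hA, hxy, ← hc, map_zero] at h1 h2
    constructor
    · simpa [hy] using h2
    · simpa [hy] using h1
  let P := Submodule.span F (Set.range ![A x, A y])
  have hP : finrank F P = 2 := by
    have := finrank_span_eq_card hli
    simpa using this
  have hPm : ∀ v, v ∈ P ↔ ∃ a b : F, a • A x + b • A y = v := by
    intro v
    simp only [P, Matrix.range_cons, Matrix.range_empty, Set.union_empty]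
    exact Submodule.mem_span_pair
  have hsup : LinearMap.range A = LinearMap.range A' ⊔ P := by
    apply le_antisymm
    · rintro _ ⟨z, rfl⟩
      rw [Submodule.mem_sup]
      refine ⟨A' z, ⟨z, rfl⟩, c⁻¹ • (y (A z) • A x - x (A z) • A y), ?_, ?_⟩
      · rw [hPm]
        refine ⟨c⁻¹ * y (A z), -(c⁻¹ * x (A z)), ?_⟩
        module
      · rw [hA'z]; abel
    · apply sup_le
      · rintro _ ⟨z, rfl⟩
        refine ⟨z - c⁻¹ • (y (A z) • x - x (A z) • y), ?_⟩
        rw [hA'z]; simp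
      · intro v hv
        obtain ⟨a, b, rfl⟩ := (hPm v).1 hv
        exact ⟨a • x + b • y, by simp⟩
  have hinf : LinearMap.range A' ⊓ P = ⊥ := by
    rw [eq_bot_iff]
    rintro v ⟨⟨z, rfl⟩, hv⟩
    obtain ⟨a, b, hab⟩ := (hPm _).1 hv
    have h1 := congrArg x hab
    have h2 := congrArg y hab
    simp only [map_add, map_smul, smul_eq_mul, hA, hxy, ← hc, kx, ky] at h1 h2
    have ha : a = 0 := by simpa [hy] using h2
    have hb : b = 0 := by simpa [hy] using h1
    rw [← hab, ha, hb]
    simp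
  have hd := Submodule.finrank_sup_add_finrank_inf_eq (LinearMap.range A') P
  rw [← hsup, hinf, hP, hm, finrank_bot] at hd
  have := ih (finrank F (LinearMap.range A')) (by omega) A' hA' rfl
  rw [show m = finrank F (LinearMap.range A') + 2 by omega]
  exact this.add (by decide)

theorem range_eq {F V : Type*} [Field F] [AddCommGroup V] [Module F V] [FiniteDimensional F V]
    (A : Dual F V →ₗ[F] V) (hA : ∀ x : Dual F V, x (A x) = 0) :
    LinearMap.range A = (LinearMap.ker A).dualCoannihilator := by
  apply Submodule.eq_of_le_of_finrank_eq
  · rintro _ ⟨z, rfl⟩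
    rw [Submodule.mem_dualCoannihilator]
    intro x hx
    rw [skew_of_alt A hA, LinearMap.mem_ker.1 hx]
    simp
  · have h1 := LinearMap.finrank_range_add_finrank_ker A
    have h2 := Subspace.finrank_add_finrank_dualCoannihilator_eq (LinearMap.ker A)
    rw [Subspace.dual_finrank_eq] at h1
    omega

theorem pencil {F V M : Type*} [Field F] [IsAlgClosed F] [AddCommGroup V] [Module F V]
    [FiniteDimensional F V] [AddCommGroup M] [Module F M]
    (A₁ A₂ : Dual F V →ₗ[F] V) (h₁ : ∀ x : Dual F V, x (A₁ x) = 0) (h₂ : ∀ x : Dual F V, x (A₂ x) = 0)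
    (a b : V →ₗ[F] M) (ha : Function.Injective a) (hb : Function.Injective b)
    (hab : ∀ x, a (A₁ x) + b (A₂ x) = 0) (hne : ¬ (A₁ = 0 ∧ A₂ = 0)) :
    ∃ (V' : Submodule F V) (μ : F), finrank F V' = 2 ∧ ∀ v ∈ V', a v + μ • b v = 0 := by
  have hker : LinearMap.ker A₁ = LinearMap.ker A₂ := by
    ext x
    rw [LinearMap.mem_ker, LinearMap.mem_ker]
    have := hab x
    constructor
    · intro h; rw [h, map_zero, zero_add] at this; exact hb (by simpa using this)
    · intro h; rw [h, map_zero, add_zero] at this; exact ha (by simpa using this)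
  have hrange : LinearMap.range A₂ = LinearMap.range A₁ := by
    rw [range_eq A₁ h₁, range_eq A₂ h₂, hker]
  have hA₁ : A₁ ≠ 0 := by
    intro h
    apply hne ⟨h, _⟩
    rw [← LinearMap.ker_eq_top, ← hker, h, LinearMap.ker_zero]
  obtain ⟨s, hs⟩ := A₁.rangeRestrict.exists_rightInverse_of_surjective A₁.range_rangeRestrict
  have hs' : ∀ u : LinearMap.range A₁, A₁ (s u) = u := fun u => by
    have := congrArg Subtype.val (LinearMap.congr_fun hs u)
    simpa using this
  let T : Module.End F (LinearMap.range A₁) :=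
    (A₂.comp s).codRestrict (LinearMap.range A₁) (fun u => hrange.le ⟨s u, rfl⟩)
  have : Nontrivial (LinearMap.range A₁) := by
    rw [Submodule.nontrivial_iff_ne_bot]
    intro h
    exact hA₁ (LinearMap.range_eq_bot.1 h)
  obtain ⟨μ, hμ⟩ := Module.End.exists_eigenvalue T
  obtain ⟨u, hu⟩ := hμ.exists_hasEigenvector
  have hTu : A₂ (s u) = μ • A₁ (s u) := by
    have := congrArg Subtype.val hu.apply_eq_smul
    rw [hs']
    simpa [T] using this
  let B := A₂ - μ • A₁
  have hB : ∀ x : Dual F V, x (B x) = 0 := fun x => by simp [B, h₁, h₂]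
  have hle : LinearMap.ker A₁ < LinearMap.ker B := by
    refine lt_of_le_of_ne ?_ ?_
    · intro x hx
      have hx2 : x ∈ LinearMap.ker A₂ := hker ▸ hx
      rw [LinearMap.mem_ker] at hx hx2 ⊢
      simp [B, hx, hx2]
    · intro h
      have : s u ∈ LinearMap.ker B := by simp [B, hTu]
      rw [← h, LinearMap.mem_ker, hs'] at this
      exact hu.2 (Subtype.ext this)
  have hlt := Submodule.finrank_lt_finrank_of_lt hle
  have e1 := even_rank _ A₁ h₁ rfl
  have e2 := even_rank _ B hB rfl
  have r1 := LinearMap.finrank_range_add_finrank_ker A₁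
  have r2 := LinearMap.finrank_range_add_finrank_ker B
  have h2 : finrank F (LinearMap.ker A₁) + 2 ≤ finrank F (LinearMap.ker B) := by
    obtain ⟨p, hp⟩ := e1
    obtain ⟨q, hq⟩ := e2
    omega
  have r3 := LinearMap.finrank_range_add_finrank_ker (K := F) (V := LinearMap.ker B) (V₂ := V) (A₁.domRestrict (LinearMap.ker B))
  have r4 : finrank F (LinearMap.ker (A₁.domRestrict (LinearMap.ker B))) ≤
      finrank F (LinearMap.ker A₁) := by
    let g : LinearMap.ker (A₁.domRestrict (LinearMap.ker B)) →ₗ[F] LinearMap.ker A₁ :=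
      LinearMap.codRestrict _ ((LinearMap.ker B).subtype.comp (Submodule.subtype _)) (fun x => x.2)
    apply LinearMap.finrank_le_finrank_of_injective (f := g)
    intro x y hxy
    have := congrArg Subtype.val hxy
    exact Subtype.ext (Subtype.ext this)
  have h3 : 2 ≤ finrank F (LinearMap.range (A₁.domRestrict (LinearMap.ker B))) := by omega
  obtain ⟨f, hf⟩ := exists_linearIndependent_of_le_finrank h3
  have hf' := hf.map' (Submodule.subtype _) (Submodule.ker_subtype _)
  refine ⟨Submodule.span F (Set.range (Submodule.subtype _ ∘ f)), μ, ?_, ?_⟩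
  · simpa using finrank_span_eq_card hf'
  · intro v hv
    have hv' : v ∈ LinearMap.range (A₁.domRestrict (LinearMap.ker B)) := by
      refine Submodule.span_le.2 ?_ hv
      rintro _ ⟨i, rfl⟩
      exact (f i).2
    obtain ⟨⟨x, hx⟩, rfl⟩ := hv'
    have hx2 : A₂ x = μ • A₁ x := by
      rw [LinearMap.mem_ker] at hx
      simpa [B, sub_eq_zero] using hx
    have := hab x
    rw [hx2, map_smul] at this
    simpa using this

abbrev Prs (k : ℕ) := {p : Fin k × Fin k // p.1 < p.2}

theorem card_prs (k : ℕ) : Fintype.card (Prs k) = k * (k - 1) / 2 := by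
  have e : Prs k ≃ Σ j : Fin k, Fin j.1 :=
    { toFun := fun p => ⟨p.1.2, ⟨p.1.1.1, p.2⟩⟩
      invFun := fun q => ⟨(⟨q.2.1, q.2.2.trans q.1.2⟩, q.1), q.2.2⟩
      left_inv := fun p => rfl
      right_inv := fun q => rfl }
  rw [Fintype.card_congr e, Fintype.card_sigma]
  simp only [Fintype.card_fin]
  rw [Fin.sum_univ_eq_sum_range (fun i => i) k, Finset.sum_range_id]

/-- the antisymmetrization of `ψ ∘ φ` in coordinates -/
noncomputable def antis {F V W : Type*} [Field F] [AddCommGroup V] [Module F V] [AddCommGroup W]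
    [Module F W] {k : ℕ} (e : Basis (Fin k) F V) (ψ : W →ₗ[F] Dual F V) :
    (V →ₗ[F] W) →ₗ[F] (Prs k → F) where
  toFun φ p := ψ (φ (e p.1.1)) (e p.1.2) - ψ (φ (e p.1.2)) (e p.1.1)
  map_add' φ φ' := by ext p; simp; ring
  map_smul' c φ := by ext p; simp; ring

theorem form_ext {F V : Type*} [Field F] [AddCommGroup V] [Module F V]
    {k : ℕ} (e : Basis (Fin k) F V) (D D' : V →ₗ[F] Dual F V)
    (h : ∀ p : Prs k, D (e p.1.1) (e p.1.2) - D (e p.1.2) (e p.1.1)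
      = D' (e p.1.1) (e p.1.2) - D' (e p.1.2) (e p.1.1)) (u v : V) :
    D u v - D v u = D' u v - D' v u := by
  have : D - D.flip = D' - D'.flip := by
    refine e.ext fun i => e.ext fun j => ?_
    simp only [LinearMap.sub_apply, LinearMap.flip_apply]
    rcases lt_trichotomy i j with hij | hij | hij
    · exact h ⟨(i, j), hij⟩
    · subst hij; simp
    · have := h ⟨(j, i), hij⟩
      simp only at this
      linear_combination -this
  have := LinearMap.congr_fun (LinearMap.congr_fun this u) v
  simpa using this

/-- the alternating map attached to coefficients -/
noncomputable def altOf {F V : Type*} [Field F] [AddCommGroup V] [Module F V]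
    {k : ℕ} (e : Basis (Fin k) F V) (c : Prs k → F) : Dual F V →ₗ[F] V where
  toFun x := ∑ p, c p • (x (e p.1.1) • e p.1.2 - x (e p.1.2) • e p.1.1)
  map_add' x y := by
    rw [← Finset.sum_add_distrib]
    refine Finset.sum_congr rfl fun p _ => ?_
    simp only [LinearMap.add_apply]
    module
  map_smul' a x := by
    rw [Finset.smul_sum]
    refine Finset.sum_congr rfl fun p _ => ?_
    simp only [LinearMap.smul_apply, RingHom.id_apply, smul_eq_mul]
    module

theorem altOf_apply {F V : Type*} [Field F] [AddCommGroup V] [Module F V]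
    {k : ℕ} (e : Basis (Fin k) F V) (c : Prs k → F) (x y : Dual F V) :
    y (altOf e c x) = ∑ p, c p * (x (e p.1.1) * y (e p.1.2) - x (e p.1.2) * y (e p.1.1)) := by
  simp [altOf, map_sum]

theorem altOf_eq_zero {F V : Type*} [Field F] [AddCommGroup V] [Module F V]
    {k : ℕ} (e : Basis (Fin k) F V) (c : Prs k → F) (h : altOf e c = 0) : c = 0 := by
  funext q
  have := altOf_apply e c (e.coord q.1.1) (e.coord q.1.2)
  rw [h] at this
  simp only [LinearMap.zero_apply, map_zero, Basis.coord_apply, Basis.repr_self,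
    Finsupp.single_apply] at this
  rw [Finset.sum_eq_single q] at this
  · have hq := q.2
    simpa [hq.ne, hq.ne'] using this.symm
  · intro p _ hpq
    obtain ⟨⟨i, j⟩, hij⟩ := p
    obtain ⟨⟨i', j'⟩, hij'⟩ := q
    simp only at *
    have hne : ¬ (i = i' ∧ j = j') := by
      rintro ⟨rfl, rfl⟩; exact hpq rfl
    have hne2 : ¬ (j = i' ∧ i = j') := by
      rintro ⟨rfl, rfl⟩; exact absurd hij (not_lt.2 hij'.le)
    clear this h
    split_ifs <;> first | (exfalso; tauto) | simp
  · intro h; exact absurd (Finset.mem_univ _) h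

theorem statement0 (F : Type*) [Field F] [IsAlgClosed F]
    (V W : Type*) [AddCommGroup V] [Module F V] [AddCommGroup W] [Module F W]
    [FiniteDimensional F V] [FiniteDimensional F W]
    (k n : ℕ) (hk : finrank F V = k) (hn : finrank F W = n)
    (ψ₁ ψ₂ : W →ₗ[F] Module.Dual F V)
    (hψ₁ : Function.Surjective ψ₁) (hψ₂ : Function.Surjective ψ₂)
    (S : Submodule F (V →ₗ[F] W))
    (hS : ∀ φ : V →ₗ[F] W, φ ∈ S ↔
      ((∀ v₁ v₂ : V, ψ₁ (φ v₁) v₂ = ψ₁ (φ v₂) v₁) ∧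
       (∀ v₁ v₂ : V, ψ₂ (φ v₁) v₂ = ψ₂ (φ v₂) v₁))) :
    finrank F S = k * n - 2 * (k * (k - 1) / 2) ↔
      ¬ ∃ (V' : Submodule F V) (l₁ l₂ : F),
        finrank F V' = 2 ∧ ¬ (l₁ = 0 ∧ l₂ = 0) ∧
        ∀ v ∈ V', ∀ w : W, l₁ * ψ₁ w v + l₂ * ψ₂ w v = 0 := by
  let e : Basis (Fin k) F V := finBasisOfFinrankEq F V hk
  let L : (V →ₗ[F] W) →ₗ[F] (Prs k → F) × (Prs k → F) := (antis e ψ₁).prod (antis e ψ₂)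
  have hform : ∀ (ψ : W →ₗ[F] Dual F V) (φ : V →ₗ[F] W), antis e ψ φ = 0 ↔
      ∀ v₁ v₂ : V, ψ (φ v₁) v₂ = ψ (φ v₂) v₁ := by
    intro ψ φ
    constructor
    · intro h u v
      have := form_ext e (ψ.comp φ) 0 (fun p => by
        have := congrFun h p
        simpa [antis] using this) u v
      simpa [sub_eq_zero] using this
    · intro h
      funext p
      simp [antis, sub_eq_zero, h (e p.1.1) (e p.1.2)]
  have hSL : S = LinearMap.ker L := by
    ext φ
    rw [hS, LinearMap.mem_ker, ← hform, ← hform]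
    simp [L, Prod.ext_iff]
  have hrn := LinearMap.finrank_range_add_finrank_ker L
  rw [← hSL, finrank_linearMap, hk, hn] at hrn
  have hT : finrank F ((Prs k → F) × (Prs k → F)) = 2 * (k * (k - 1) / 2) := by
    rw [finrank_prod, finrank_fintype_fun_eq_card, card_prs]; ring
  have hle := Submodule.finrank_le (LinearMap.range L)
  have hkn : k ≤ n := by
    have := LinearMap.finrank_le_finrank_of_surjective hψ₁
    rwa [Subspace.dual_finrank_eq, hk, hn] at this
  have hb : 2 * (k * (k - 1) / 2) ≤ k * n :=
    (Nat.mul_div_le _ _).trans (Nat.mul_le_mul_left _ (by omega))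
  have hiff : finrank F S = k * n - 2 * (k * (k - 1) / 2) ↔ LinearMap.range L = ⊤ := by
    constructor
    · intro h
      apply Submodule.eq_top_of_finrank_eq
      omega
    · intro h
      rw [h, finrank_top] at hrn
      omega
  rw [hiff]
  constructor
  · rintro htop ⟨V', l₁, l₂, hV', hl, hv⟩
    apply hl
    let b : Basis (Fin 2) F V' := finBasisOfFinrankEq F V' hV'
    obtain ⟨α, hα⟩ := LinearMap.exists_extend (b.coord 0)
    obtain ⟨β, hβ⟩ := LinearMap.exists_extend (b.coord 1)
    have hα' : ∀ i, α (b i) = b.coord 0 (b i) := fun i => LinearMap.congr_fun hα (b i)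
    have hβ' : ∀ i, β (b i) = b.coord 1 (b i) := fun i => LinearMap.congr_fun hβ (b i)
    let D : F → V →ₗ[F] Dual F V := fun s => s • α.smulRight β
    have key : ∀ s₁ s₂ : F, l₁ * s₁ + l₂ * s₂ = 0 := by
      intro s₁ s₂
      obtain ⟨φ, hφ⟩ := LinearMap.range_eq_top.1 htop
        (fun p => D s₁ (e p.1.1) (e p.1.2) - D s₁ (e p.1.2) (e p.1.1),
         fun p => D s₂ (e p.1.1) (e p.1.2) - D s₂ (e p.1.2) (e p.1.1))
      obtain ⟨hφ1, hφ2⟩ := Prod.ext_iff.1 hφ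
      have q1 := form_ext e (ψ₁.comp φ) (D s₁) (fun p => congrFun hφ1 p) (b 0) (b 1)
      have q2 := form_ext e (ψ₂.comp φ) (D s₂) (fun p => congrFun hφ2 p) (b 0) (b 1)
      have d : ∀ s, D s (b 0) (b 1) - D s (b 1) (b 0) = s := by
        intro s
        simp [D, hα', hβ']
      rw [d] at q1 q2
      rw [← q1, ← q2]
      have v1 := hv (b 1) (b 1).2 (φ (b 0))
      have v0 := hv (b 0) (b 0).2 (φ (b 1))
      simp only [LinearMap.comp_apply]
      linear_combination v1 - v0
    exact ⟨by simpa using key 1 0, by simpa using key 0 1⟩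
  · intro hno
    by_contra htop
    apply hno
    obtain ⟨f, hf0, hf⟩ := Submodule.exists_le_ker_of_lt_top _ (lt_top_iff_ne_top.2 htop)
    let c₁ : Prs k → F := fun p => f (Pi.single p 1, 0)
    let c₂ : Prs k → F := fun p => f (0, Pi.single p 1)
    have hfc : ∀ t, f t = ∑ p, c₁ p * t.1 p + ∑ p, c₂ p * t.2 p := by
      rintro ⟨t₁, t₂⟩
      have e1 : f (t₁, 0) = ∑ p, c₁ p * t₁ p := by
        have := (f.comp (LinearMap.inl F _ _)).pi_apply_eq_sum_univ t₁
        simp only [LinearMap.comp_apply, LinearMap.inl_apply] at this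
        rw [this]
        refine Finset.sum_congr rfl fun p _ => ?_
        rw [smul_eq_mul, mul_comm]
        congr 3
        ext q
        simp [c₁, Pi.single_apply, eq_comm]
      have e2 : f (0, t₂) = ∑ p, c₂ p * t₂ p := by
        have := (f.comp (LinearMap.inr F _ _)).pi_apply_eq_sum_univ t₂
        simp only [LinearMap.comp_apply, LinearMap.inr_apply] at this
        rw [this]
        refine Finset.sum_congr rfl fun p _ => ?_
        rw [smul_eq_mul, mul_comm]
        congr 3
        ext q
        simp [c₂, Pi.single_apply, eq_comm]
      rw [← e1, ← e2, ← map_add]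
      simp
    have inj : ∀ ψ : W →ₗ[F] Dual F V, Function.Surjective ψ → Function.Injective ψ.flip := by
      intro ψ hψ
      rw [injective_iff_map_eq_zero]
      intro v hv
      rw [← forall_dual_apply_eq_zero_iff F]
      intro x
      obtain ⟨w, rfl⟩ := hψ x
      exact LinearMap.congr_fun hv w
    have alt : ∀ c : Prs k → F, ∀ x : Dual F V, x (altOf e c x) = 0 := by
      intro c x
      rw [altOf_apply]
      exact Finset.sum_eq_zero fun p _ => by ring
    obtain ⟨V', μ, h2, hV'⟩ := pencil (altOf e c₁) (altOf e c₂) (alt c₁) (alt c₂)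
      ψ₁.flip ψ₂.flip (inj _ hψ₁) (inj _ hψ₂) (by
        intro x
        ext w
        have h : f (L (x.smulRight w)) = 0 := hf ⟨_, rfl⟩
        rw [hfc] at h
        simp only [LinearMap.add_apply, LinearMap.flip_apply, altOf_apply, LinearMap.zero_apply]
        rw [← h]
        simp [L, antis]) (by
        rintro ⟨z1, z2⟩
        apply hf0
        ext t
        all_goals simp [hfc, altOf_eq_zero e _ z1, altOf_eq_zero e _ z2])
    refine ⟨V', 1, μ, h2, by simp, fun v hv w => ?_⟩
    have := LinearMap.congr_fun (hV' v hv) w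
    simpa using this
end

section
/- Let F be an algebraically closed field, let E be an F-vector space of finite dimension r, and let B₁, B₂ be two symplectic forms on E. Let V ⊆ E be a subspace of dimension k which is totally isotropic for both B₁ and B₂. Since V is totally isotropic for each Bᵢ, the expression Bᵢ(v, e) for v ∈ V depends only on the class of e in E/V, so for φ ∈ Hom_F(V, E/V) the pairing Bᵢ(v₁, φ(v₂)) is well defined for v₁, v₂ ∈ V. Consider the subspace T = {φ ∈ Hom_F(V, E/V) : for i = 1, 2 and all v₁, v₂ ∈ V, Bᵢ(v₁, φ(v₂)) = Bᵢ(v₂, φ(v₁))}. Then dim T = k(r−k) − 2·(k(k−1)/2) if and only if there do not exist scalars λ₁, λ₂ ∈ F, not both zero, and a 2-dimensional subspace V′ ⊆ V such that λ₁·B₁(v, e) + λ₂·B₂(v, e) = 0 for all v ∈ V′ and all e ∈ E. -/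
open Module

theorem even_aux (F : Type*) [Field F] : ∀ (n : ℕ) (P : Type _) [AddCommGroup P] [Module F P]
    [FiniteDimensional F P] (w : P →ₗ[F] P →ₗ[F] F) (_ : ∀ v, w v v = 0) (_ : finrank F P = n),
    Even (finrank F P + finrank F (LinearMap.ker w)) := by
  intro n
  induction n using Nat.strong_induction_on with
  | _ n ih =>
  intro P _ _ _ w hw hn
  have hneg : ∀ a b, w a b = - w b a := fun a b => by
    have := hw (a + b)
    simp only [map_add, LinearMap.add_apply, hw] at this
    linear_combination this
  by_cases h0 : w = 0
  · subst h0
    rw [LinearMap.ker_zero, finrank_top]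
    exact ⟨_, rfl⟩
  obtain ⟨x, y', hxy'⟩ : ∃ x y, w x y ≠ 0 := by
    by_contra! h
    exact h0 (by ext a b; simpa using h a b)
  obtain ⟨y, hxy⟩ : ∃ y, w x y = 1 := ⟨(w x y')⁻¹ • y', by simp [hxy']⟩
  have hyx : w y x = -1 := by rw [hneg, hxy]
  let g : P →ₗ[F] F × F := (w x).prod (w y)
  have hg : LinearMap.range g = ⊤ := by
    rw [LinearMap.range_eq_top]
    rintro ⟨a, b⟩
    refine ⟨a • y - b • x, ?_⟩
    simp [g, hxy, hyx, hw]
  let H := LinearMap.ker g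
  have hH : ∀ z, z ∈ H ↔ w x z = 0 ∧ w y z = 0 := fun z => by
    simp [H, g]
  have hdim : finrank F H + 2 = finrank F P := by
    have := LinearMap.finrank_range_add_finrank_ker g
    rw [hg, finrank_top] at this
    simp only [finrank_prod, finrank_self] at this
    change finrank F (LinearMap.ker g) + 2 = _
    omega
  let w' : H →ₗ[F] H →ₗ[F] F := w.domRestrict₁₂ H H
  have hw' : ∀ a b : H, w' a b = w a b := fun a b => rfl
  have e := ih (finrank F H) (by omega) H w' (fun v => hw v) rfl
  have hker : (LinearMap.ker w').map H.subtype = LinearMap.ker w := by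
    ext z
    simp only [Submodule.mem_map, LinearMap.mem_ker, Submodule.subtype_apply]
    constructor
    · rintro ⟨z, hz, rfl⟩
      ext p
      have hz2 := (hH z).1 z.2
      have hp : p - (-(w y p)) • x - (w x p) • y ∈ H := by
        rw [hH]
        simp [hxy, hyx, hw]
      have := congrArg (fun f => f ⟨_, hp⟩) hz
      simp only [hw'] at this
      simp only [map_sub, map_smul, LinearMap.zero_apply, hneg z x, hneg z y, hz2] at this
      simpa using this
    · intro hz
      have hzH : z ∈ H := by
        rw [hH, hneg x, hneg y, hz]; simp
      refine ⟨⟨z, hzH⟩, ?_, rfl⟩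
      ext p
      simp [hw', hz]
  have hfk : finrank F (LinearMap.ker w') = finrank F (LinearMap.ker w) := by
    rw [← hker, Submodule.finrank_map_subtype_eq]
  rw [hfk] at e
  rw [← hdim]
  rcases e with ⟨m, hm⟩
  exact ⟨m + 1, by omega⟩

theorem pencil_aux (F : Type*) [Field F] [IsAlgClosed F] (P : Type*) [AddCommGroup P] [Module F P]
    [FiniteDimensional F P] [Nontrivial P] (w₁ w₂ : P →ₗ[F] P →ₗ[F] F)
    (h₁ : ∀ v, w₁ v v = 0) (h₂ : ∀ v, w₂ v v = 0)
    (n₂ : LinearMap.ker w₂ = ⊥) :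
    ∃ l : F, 2 ≤ finrank F (LinearMap.ker (w₁ - l • w₂)) := by
  let e : P ≃ₗ[F] Dual F P := LinearEquiv.ofInjectiveOfFinrankEq w₂
    (LinearMap.ker_eq_bot.1 n₂) (Subspace.dual_finrank_eq).symm
  have he : ∀ x, e x = w₂ x := fun x => rfl
  obtain ⟨l, hl⟩ := Module.End.exists_eigenvalue (e.symm.toLinearMap ∘ₗ w₁ : End F P)
  obtain ⟨v, hv⟩ := hl.exists_hasEigenvector
  refine ⟨l, ?_⟩
  have hv1 : w₁ v = l • w₂ v := by
    have := hv.apply_eq_smul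
    simp only [LinearMap.comp_apply, LinearEquiv.coe_coe] at this
    rw [LinearEquiv.symm_apply_eq, map_smul, he] at this
    exact this
  have hmem : v ∈ LinearMap.ker (w₁ - l • w₂) := by
    simp [hv1]
  have e1 := even_aux F _ P w₂ h₂ rfl
  have e2 := even_aux F _ P (w₁ - l • w₂) (fun v => by simp [h₁, h₂]) rfl
  rw [n₂, finrank_bot] at e1
  have : 0 < finrank F (LinearMap.ker (w₁ - l • w₂)) := by
    rw [Module.finrank_pos_iff_exists_ne_zero]
    exact ⟨⟨v, hmem⟩, fun h => hv.2 (by simpa using h)⟩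
  rcases e1 with ⟨a, ha⟩
  rcases e2 with ⟨b, hb⟩
  omega

theorem forward_aux (F : Type*) [Field F] [IsAlgClosed F] (U E : Type*)
    [AddCommGroup U] [Module F U] [FiniteDimensional F U]
    [AddCommGroup E] [Module F E] [FiniteDimensional F E]
    (B₁ B₂ : E →ₗ[F] E →ₗ[F] F)
    (hB₁nd : LinearMap.ker B₁ = ⊥) (hB₂nd : LinearMap.ker B₂ = ⊥)
    (c₁ c₂ : U →ₗ[F] Dual F U) (h₁ : ∀ v, c₁ v v = 0) (h₂ : ∀ v, c₂ v v = 0)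
    (L : Dual F U →ₗ[F] E) (hL : LinearMap.ker L = ⊥)
    (hc : ∀ u, B₁ (L (c₁ u)) + B₂ (L (c₂ u)) = 0) (hne : c₁ ≠ 0 ∨ c₂ ≠ 0) :
    ∃ (l : F) (V' : Submodule F E), V' ≤ LinearMap.range L ∧ finrank F V' = 2 ∧
      ∀ v ∈ V', l • B₁ v + B₂ v = 0 := by
  have i₁ : ∀ x, B₁ x = 0 → x = 0 := fun x hx => by
    have : x ∈ LinearMap.ker B₁ := hx
    rwa [hB₁nd] at this
  have i₂ : ∀ x, B₂ x = 0 → x = 0 := fun x hx => by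
    have : x ∈ LinearMap.ker B₂ := hx
    rwa [hB₂nd] at this
  have iL : ∀ x, L x = 0 → x = 0 := fun x hx => by
    have : x ∈ LinearMap.ker L := hx
    rwa [hL] at this
  have k12 : ∀ u, c₁ u = 0 → c₂ u = 0 := fun u hu => by
    have := hc u
    rw [hu] at this
    exact iL _ (i₂ _ (by simpa using this))
  have k21 : ∀ u, c₂ u = 0 → c₁ u = 0 := fun u hu => by
    have := hc u
    rw [hu] at this
    exact iL _ (i₁ _ (by simpa using this))
  have hneg₁ : ∀ a b, c₁ a b = - c₁ b a := fun a b => by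
    have := h₁ (a + b)
    simp only [map_add, LinearMap.add_apply, h₁] at this
    linear_combination this
  have hneg₂ : ∀ a b, c₂ a b = - c₂ b a := fun a b => by
    have := h₂ (a + b)
    simp only [map_add, LinearMap.add_apply, h₂] at this
    linear_combination this
  obtain ⟨P, hP⟩ := (LinearMap.ker c₂).exists_isCompl
  have hdec : ∀ u, ∃ n p, c₂ n = 0 ∧ p ∈ P ∧ n + p = u := fun u => by
    have : u ∈ LinearMap.ker c₂ ⊔ P := by rw [hP.sup_eq_top]; trivial
    obtain ⟨n, hn, p, hp, h⟩ := Submodule.mem_sup.1 this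
    exact ⟨n, p, hn, hp, h⟩
  have hPi : ∀ p ∈ P, c₂ p = 0 → p = 0 := fun p hp h => by
    have : p ∈ LinearMap.ker c₂ ⊓ P := ⟨h, hp⟩
    rwa [hP.inf_eq_bot] at this
  let w₁ : P →ₗ[F] P →ₗ[F] F := LinearMap.domRestrict₁₂ c₁ P P
  let w₂ : P →ₗ[F] P →ₗ[F] F := LinearMap.domRestrict₁₂ c₂ P P
  have hw₁ : ∀ a b : P, w₁ a b = c₁ a b := fun a b => rfl
  have hw₂ : ∀ a b : P, w₂ a b = c₂ a b := fun a b => rfl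
  -- vanishing on `P` implies vanishing
  have ext1 : ∀ (l : F) (u : U), (∀ p ∈ P, c₁ u p = l * c₂ u p) → c₁ u = l • c₂ u := by
    intro l u h
    ext x
    obtain ⟨n, p, hn, hp, rfl⟩ := hdec x
    have hn1 := k21 n hn
    simp only [map_add, LinearMap.smul_apply, smul_eq_mul, h p hp, hneg₁ u n, hneg₂ u n, hn, hn1]
    simp
  have ext2 : ∀ (u : U), (∀ p ∈ P, c₂ u p = 0) → c₂ u = 0 := by
    intro u h
    ext x
    obtain ⟨n, p, hn, hp, rfl⟩ := hdec x
    simp only [map_add, h p hp, hneg₂ u n, hn]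
    simp
  have n₂ : LinearMap.ker w₂ = ⊥ := by
    rw [LinearMap.ker_eq_bot']
    intro u hu
    have : c₂ u = 0 := ext2 u fun p hp => by
      have := congrArg (fun f => f ⟨p, hp⟩) hu
      simpa [hw₂] using this
    exact Subtype.ext (hPi u u.2 this)
  have : Nontrivial P := by
    rw [Submodule.nontrivial_iff_ne_bot]
    rintro rfl
    have hz : ∀ u, c₂ u = 0 := fun u => by
      obtain ⟨n, p, hn, hp, rfl⟩ := hdec u
      simp only [Submodule.mem_bot] at hp
      simp [hn, hp]
    rcases hne with h | h
    · exact h (LinearMap.ext fun u => k21 u (hz u))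
    · exact h (LinearMap.ext fun u => hz u)
  obtain ⟨l, hl⟩ := pencil_aux F P w₁ w₂ (fun v => h₁ v) (fun v => h₂ v) n₂
  obtain ⟨f, hf⟩ := exists_linearIndependent_of_le_finrank hl
  let g : LinearMap.ker (w₁ - l • w₂) →ₗ[F] E :=
    L ∘ₗ c₂ ∘ₗ P.subtype ∘ₗ (LinearMap.ker (w₁ - l • w₂)).subtype
  have hg : LinearMap.ker g = ⊥ := by
    rw [LinearMap.ker_eq_bot']
    intro u hu
    exact Subtype.ext (Subtype.ext (hPi _ u.1.2 (iL _ hu)))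
  have hgf := hf.map' g hg
  refine ⟨l, Submodule.span F (Set.range (g ∘ f)), ?_, ?_, ?_⟩
  · rw [Submodule.span_le]
    rintro _ ⟨i, rfl⟩
    exact ⟨_, rfl⟩
  · rw [finrank_span_eq_card hgf]; simp
  · have hle : Submodule.span F (Set.range (g ∘ f)) ≤ LinearMap.ker (l • B₁ + B₂) := by
      rw [Submodule.span_le]
      rintro _ ⟨i, rfl⟩
      have hu := (f i).2
      have hcu : c₁ (f i).1.1 = l • c₂ (f i).1.1 := ext1 l _ fun p hp => by
        have := congrArg (fun h => h ⟨p, hp⟩) (LinearMap.mem_ker.1 hu)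
        simp only [LinearMap.sub_apply, LinearMap.smul_apply, hw₁, hw₂,
          LinearMap.zero_apply, smul_eq_mul] at this
        linear_combination this
      have := hc (f i).1.1
      rw [hcu] at this
      simpa [g] using this
    intro v hv
    simpa using hle hv

theorem card_pairs_aux (k : ℕ) :
    Fintype.card {p : Fin k × Fin k // p.1 < p.2} = k * (k - 1) / 2 := by
  have e : {p : Fin k × Fin k // p.1 < p.2} ≃ (Σ j : Fin k, Fin j.1) :=
    { toFun := fun p => ⟨p.1.2, ⟨p.1.1.1, p.2⟩⟩
      invFun := fun q => ⟨(⟨q.2.1, q.2.2.trans q.1.2⟩, q.1), q.2.2⟩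
      left_inv := fun p => rfl
      right_inv := fun q => rfl }
  rw [Fintype.card_congr e, Fintype.card_sigma]
  simp only [Fintype.card_fin]
  rw [Fin.sum_univ_eq_sum_range (fun i => i) k, Finset.sum_range_id]

theorem dual_aux (F V : Type*) [Field F] [AddCommGroup V] [Module F V] (v : Fin 2 → V)
    (h : LinearIndependent F v) (a : Fin 2 → F) : ∃ p : Dual F V, ∀ i, p (v i) = a i := by
  let s := Basis.span h
  obtain ⟨p, hp⟩ := LinearMap.exists_extend (s.constr F a : _ →ₗ[F] F)
  refine ⟨p, fun i => ?_⟩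
  have h1 := congrArg (fun f => f (s i)) hp
  simp only [Basis.constr_basis, LinearMap.comp_apply, Submodule.subtype_apply] at h1
  rw [← h1, Basis.span_apply]

theorem delta_aux (k : ℕ) (F : Type*) [Field F] (i j : {p : Fin k × Fin k // p.1 < p.2}) :
    (Pi.single i 1 : {p : Fin k × Fin k // p.1 < p.2} → F) j =
      (if j.1.1 = i.1.1 then 1 else 0) * (if j.1.2 = i.1.2 then 1 else 0) -
      (if j.1.2 = i.1.1 then 1 else 0) * (if j.1.1 = i.1.2 then 1 else 0) := by
  obtain ⟨⟨i1, i2⟩, hi⟩ := i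
  obtain ⟨⟨j1, j2⟩, hj⟩ := j
  simp only at hi hj
  have h3 : ¬ (j2 = i1 ∧ j1 = i2) := by
    rintro ⟨rfl, rfl⟩
    exact lt_asymm hi hj
  by_cases h1 : j1 = i1 <;> by_cases h2 : j2 = i2 <;> by_cases h4 : j2 = i1 <;>
    by_cases h5 : j1 = i2 <;> simp_all [Pi.single_apply]

set_option maxHeartbeats 1000000 in
/-- (Theorem `dsg-crit` of Osserman, fiberwise form.)
Over an algebraically closed field `F`, let `B₁, B₂` be symplectic forms on an
`r`-dimensional space `E`, and let `V ⊆ E` be a `k`-dimensional subspace which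
is totally isotropic for both forms.  Let `Bq₁, Bq₂` be the induced pairings
`V × (E/V) → F` (well defined since `V` is isotropic), and let
`T = {φ : V →ₗ E/V | Bᵢ(v₁, φ(v₂)) = Bᵢ(v₂, φ(v₁)) for i = 1,2}`.  Then
`dim T = k(r-k) - 2·(k(k-1)/2)` iff there exist no scalars `λ₁, λ₂`, not both
zero, and no `2`-dimensional subspace `V' ⊆ V` with
`λ₁·B₁(v,e) + λ₂·B₂(v,e) = 0` for all `v ∈ V'`, `e ∈ E`. -/
theorem statement1 (F : Type*) [Field F] [IsAlgClosed F]
    (E : Type*) [AddCommGroup E] [Module F E] [FiniteDimensional F E]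
    (r k : ℕ) (hr : finrank F E = r)
    (B₁ B₂ : E →ₗ[F] E →ₗ[F] F)
    (hB₁alt : ∀ v : E, B₁ v v = 0) (hB₂alt : ∀ v : E, B₂ v v = 0)
    (hB₁nd : LinearMap.ker B₁ = ⊥) (hB₂nd : LinearMap.ker B₂ = ⊥)
    (V : Submodule F E) (hk : finrank F V = k)
    (hV₁ : ∀ v ∈ V, ∀ w ∈ V, B₁ v w = 0)
    (hV₂ : ∀ v ∈ V, ∀ w ∈ V, B₂ v w = 0)
    (Bq₁ Bq₂ : V →ₗ[F] (E ⧸ V) →ₗ[F] F)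
    (hBq₁ : ∀ (v : V) (e : E), Bq₁ v (Submodule.Quotient.mk e) = B₁ v e)
    (hBq₂ : ∀ (v : V) (e : E), Bq₂ v (Submodule.Quotient.mk e) = B₂ v e)
    (T : Submodule F (V →ₗ[F] E ⧸ V))
    (hT : ∀ φ : V →ₗ[F] E ⧸ V, φ ∈ T ↔
      ((∀ v₁ v₂ : V, Bq₁ v₁ (φ v₂) = Bq₁ v₂ (φ v₁)) ∧
       (∀ v₁ v₂ : V, Bq₂ v₁ (φ v₂) = Bq₂ v₂ (φ v₁)))) :
    finrank F T = k * (r - k) - 2 * (k * (k - 1) / 2) ↔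
      ¬ ∃ (l₁ l₂ : F) (V' : Submodule F E),
        ¬ (l₁ = 0 ∧ l₂ = 0) ∧ V' ≤ V ∧ finrank F V' = 2 ∧
        ∀ v ∈ V', ∀ e : E, l₁ * B₁ v e + l₂ * B₂ v e = 0 := by
  classical
  let b : Basis (Fin k) F V := finBasisOfFinrankEq F V hk
  let I := {p : Fin k × Fin k // p.1 < p.2}
  -- the difference map
  let Ψ : (V →ₗ[F] (E ⧸ V) →ₗ[F] F) → ((V →ₗ[F] E ⧸ V) →ₗ[F] (I → F)) := fun Bq =>
    { toFun := fun φ p => Bq (b p.1.1) (φ (b p.1.2)) - Bq (b p.1.2) (φ (b p.1.1))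
      map_add' := fun x y => by ext p; simp; ring
      map_smul' := fun c x => by ext p; simp; ring }
  have hΨ : ∀ Bq φ p, Ψ Bq φ p =
    Bq (b p.1.1) (φ (b p.1.2)) - Bq (b p.1.2) (φ (b p.1.1)) := fun _ _ _ => rfl
  -- extension from basis pairs
  have hext : ∀ (Bq : V →ₗ[F] (E ⧸ V) →ₗ[F] F) (φ : V →ₗ[F] E ⧸ V) (p q : Dual F V),
      (∀ i : I, Ψ Bq φ i = p (b i.1.1) * q (b i.1.2) - p (b i.1.2) * q (b i.1.1)) →
      ∀ v w, Bq v (φ w) - Bq w (φ v) = p v * q w - p w * q v := by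
    intro Bq φ p q h
    let D₁ : V →ₗ[F] V →ₗ[F] F := Bq.compl₂ φ - (Bq.compl₂ φ).flip
    let D₂ : V →ₗ[F] V →ₗ[F] F :=
      LinearMap.mk₂ F (fun v w => p v * q w - p w * q v)
        (by intros; simp; ring) (by intros; simp; ring)
        (by intros; simp; ring) (by intros; simp; ring)
    have : D₁ = D₂ := by
      refine b.ext fun i => b.ext fun j => ?_
      change Bq (b i) (φ (b j)) - Bq (b j) (φ (b i)) = p (b i) * q (b j) - p (b j) * q (b i)
      rcases lt_trichotomy i j with hij | hij | hij
      · exact h ⟨(i, j), hij⟩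
      · subst hij; ring
      · have := h ⟨(j, i), hij⟩
        rw [hΨ] at this
        linear_combination -this
    intro v w
    exact congrArg (fun D => D v w) this
  let Φ : (V →ₗ[F] E ⧸ V) →ₗ[F] (I → F) × (I → F) := (Ψ Bq₁).prod (Ψ Bq₂)
  have hTker : T = LinearMap.ker Φ := by
    ext φ
    rw [hT, LinearMap.mem_ker]
    constructor
    · rintro ⟨h1, h2⟩
      refine Prod.ext (funext fun i => ?_) (funext fun i => ?_)
      · exact sub_eq_zero.2 (h1 _ _)
      · exact sub_eq_zero.2 (h2 _ _)
    · intro h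
      have h1 : Ψ Bq₁ φ = 0 := congrArg Prod.fst h
      have h2 : Ψ Bq₂ φ = 0 := congrArg Prod.snd h
      refine ⟨fun v w => ?_, fun v w => ?_⟩
      · have := hext Bq₁ φ 0 0 (fun i => by simp [h1]) v w
        simpa [sub_eq_zero] using this
      · have := hext Bq₂ φ 0 0 (fun i => by simp [h2]) v w
        simpa [sub_eq_zero] using this
  have hq : finrank F (E ⧸ V) = r - k := by
    have := V.finrank_quotient_add_finrank
    omega
  have hrank : finrank F (LinearMap.range Φ) + finrank F T = k * (r - k) := by
    rw [hTker, LinearMap.finrank_range_add_finrank_ker, finrank_linearMap, hk, hq]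
  have htarget : finrank F ((I → F) × (I → F)) = 2 * (k * (k - 1) / 2) := by
    rw [finrank_prod, finrank_fintype_fun_eq_card, card_pairs_aux]; ring
  have hkr : k ≤ r - k := by
    have hinj : Function.Injective Bq₁ := by
      rw [← LinearMap.ker_eq_bot, LinearMap.ker_eq_bot']
      intro v hv
      have : (v : E) ∈ LinearMap.ker B₁ := by
        rw [LinearMap.mem_ker]
        ext e
        rw [← hBq₁, hv]; simp
      rw [hB₁nd] at this
      exact Subtype.ext this
    have := LinearMap.finrank_le_finrank_of_injective hinj
    rw [hk] at this
    have h2 : finrank F (E ⧸ V →ₗ[F] F) = r - k := by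
      rw [← hq]; exact Subspace.dual_finrank_eq
    omega
  have hle : 2 * (k * (k - 1) / 2) ≤ k * (r - k) := by
    have h1 : 2 * (k * (k - 1) / 2) ≤ k * (k - 1) := Nat.mul_div_le _ _
    have h2 : k * (k - 1) ≤ k * (r - k) := Nat.mul_le_mul_left _ (by omega)
    omega
  have hsurj : finrank F T = k * (r - k) - 2 * (k * (k - 1) / 2) ↔ LinearMap.range Φ = ⊤ := by
    constructor
    · intro h
      apply Submodule.eq_top_of_finrank_eq
      rw [htarget]; omega
    · intro h
      rw [h, finrank_top, htarget] at hrank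
      omega
  rw [hsurj]
  constructor
  · rintro hs ⟨l₁, l₂, V', hl, hV', hd, hv⟩
    obtain ⟨f, hf⟩ := exists_linearIndependent_of_le_finrank hd.ge
    let x : V := ⟨f 0, hV' (f 0).2⟩
    let y : V := ⟨f 1, hV' (f 1).2⟩
    have hxy : LinearIndependent F ![x, y] := by
      have := hf.map' (Submodule.inclusion hV') (Submodule.ker_inclusion _ _ _)
      have he : ![x, y] = (Submodule.inclusion hV') ∘ f := by
        funext i
        fin_cases i <;> rfl
      rw [he]
      exact this
    obtain ⟨p, hpx, hpy⟩ : ∃ p : Dual F V, p x = 1 ∧ p y = 0 := by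
      obtain ⟨p, hp⟩ := dual_aux F V _ hxy ![1, 0]
      exact ⟨p, hp 0, hp 1⟩
    obtain ⟨q, hqx, hqy⟩ : ∃ p : Dual F V, p x = 0 ∧ p y = 1 := by
      obtain ⟨p, hp⟩ := dual_aux F V _ hxy ![0, 1]
      exact ⟨p, hp 0, hp 1⟩
    rw [LinearMap.range_eq_top] at hs
    let d : I → F := fun i => p (b i.1.1) * q (b i.1.2) - p (b i.1.2) * q (b i.1.1)
    -- the relation on `V'`
    have hrel : ∀ v ∈ V', ∀ hvV : v ∈ V, ∀ e, l₁ * Bq₁ ⟨v, hvV⟩ e + l₂ * Bq₂ ⟨v, hvV⟩ e = 0 := by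
      intro v hv' hvV e
      obtain ⟨e, rfl⟩ := Submodule.Quotient.mk_surjective V e
      rw [hBq₁, hBq₂]
      exact hv v hv' e
    have hx := fun e => hrel (f 0) (f 0).2 x.2 e
    have hy := fun e => hrel (f 1) (f 1).2 y.2 e
    apply hl
    constructor
    · obtain ⟨φ, hφ⟩ := hs (d, 0)
      have h1 : Ψ Bq₁ φ = d := congrArg Prod.fst hφ
      have h2 : Ψ Bq₂ φ = 0 := congrArg Prod.snd hφ
      have g1 := hext Bq₁ φ p q (fun i => by rw [h1]) x y
      have g2 := hext Bq₂ φ 0 0 (fun i => by simp [h2]) x y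
      have a1 : l₁ * Bq₁ x (φ y) + l₂ * Bq₂ x (φ y) = 0 := hx _
      have a2 : l₁ * Bq₁ y (φ x) + l₂ * Bq₂ y (φ x) = 0 := hy _
      rw [hpx, hpy, hqx, hqy] at g1
      simp only [LinearMap.zero_apply] at g2
      linear_combination a1 - a2 - l₁ * g1 - l₂ * g2
    · obtain ⟨φ, hφ⟩ := hs (0, d)
      have h1 : Ψ Bq₁ φ = 0 := congrArg Prod.fst hφ
      have h2 : Ψ Bq₂ φ = d := congrArg Prod.snd hφ
      have g2 := hext Bq₂ φ p q (fun i => by rw [h2]) x y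
      have g1 := hext Bq₁ φ 0 0 (fun i => by simp [h1]) x y
      have a1 : l₁ * Bq₁ x (φ y) + l₂ * Bq₂ x (φ y) = 0 := hx _
      have a2 : l₁ * Bq₁ y (φ x) + l₂ * Bq₂ y (φ x) = 0 := hy _
      rw [hpx, hpy, hqx, hqy] at g2
      simp only [LinearMap.zero_apply] at g1
      linear_combination a1 - a2 - l₁ * g1 - l₂ * g2
  · intro hno
    by_contra hs
    apply hno
    obtain ⟨η, hη0, hη⟩ := Submodule.exists_le_ker_of_lt_top _ (lt_top_iff_ne_top.2 hs)
    let wd : Dual F V →ₗ[F] Dual F V →ₗ[F] (I → F) :=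
      LinearMap.mk₂ F (fun f g i => f (b i.1.1) * g (b i.1.2) - f (b i.1.2) * g (b i.1.1))
        (by intros; ext; simp; ring) (by intros; ext; simp; ring)
        (by intros; ext; simp; ring) (by intros; ext; simp; ring)
    have hwd : ∀ f g i, wd f g i = f (b i.1.1) * g (b i.1.2) - f (b i.1.2) * g (b i.1.1) :=
      fun _ _ _ => rfl
    have hwa : ∀ f, wd f f = 0 := fun f => by ext i; rw [hwd]; simp; ring
    let η₁ := η ∘ₗ LinearMap.inl F (I → F) (I → F)
    let η₂ := η ∘ₗ LinearMap.inr F (I → F) (I → F)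
    have hηs : ∀ a c, η (a, c) = η₁ a + η₂ c := fun a c => by
      simp [η₁, η₂, ← map_add]
    let c₁ : Dual F V →ₗ[F] Dual F (Dual F V) := wd.compr₂ η₁
    let c₂ : Dual F V →ₗ[F] Dual F (Dual F V) := wd.compr₂ η₂
    have hspan : ∀ ζ : (I → F) →ₗ[F] F, (∀ f g, ζ (wd f g) = 0) → ζ = 0 := by
      intro ζ h
      refine (Pi.basisFun F I).ext fun i => ?_
      have := h (b.coord i.1.1) (b.coord i.1.2)
      rw [LinearMap.zero_apply, ← this]
      congr 1
      ext j
      rw [hwd]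
      rw [Pi.basisFun_apply, delta_aux k F i j]
      simp only [Basis.coord_apply, Basis.repr_self, Finsupp.single_apply]
    let ev := evalEquiv F V
    have hc : ∀ (B : E →ₗ[F] E →ₗ[F] F) (Bq : V →ₗ[F] (E ⧸ V) →ₗ[F] F)
        (_ : ∀ (v : V) (e : E), Bq v (Submodule.Quotient.mk e) = B v e)
        (ζ : (I → F) →ₗ[F] F) (f : Dual F V) (e : E),
        B (ev.symm (wd.compr₂ ζ f) : V) e =
          - ζ (Ψ Bq (f.smulRight (Submodule.Quotient.mk e))) := by
      intro B Bq hBq ζ f e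
      rw [← hBq]
      have : Bq (ev.symm (wd.compr₂ ζ f)) (Submodule.Quotient.mk e) =
          (Bq.flip (Submodule.Quotient.mk e)) (ev.symm (wd.compr₂ ζ f)) := rfl
      rw [this, Module.apply_evalEquiv_symm_apply, LinearMap.compr₂_apply, ← map_neg]
      congr 1
      ext i
      rw [hwd, Pi.neg_apply, hΨ]
      simp
    obtain ⟨l, V', h1, h2, h3⟩ := forward_aux F (Dual F V) E B₁ B₂ hB₁nd hB₂nd c₁ c₂
      (fun f => by simp [c₁, hwa]) (fun f => by simp [c₂, hwa])
      (V.subtype ∘ₗ ev.symm.toLinearMap)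
      (by
        rw [LinearMap.ker_eq_bot]
        exact V.injective_subtype.comp ev.symm.injective)
      (by
        intro f
        ext e
        have e1 := hc B₁ Bq₁ hBq₁ η₁ f e
        have e2 := hc B₂ Bq₂ hBq₂ η₂ f e
        have e3 : η (Φ (f.smulRight (Submodule.Quotient.mk e))) = 0 := hη ⟨_, rfl⟩
        have e4 : Φ (f.smulRight (Submodule.Quotient.mk e)) =
          (Ψ Bq₁ (f.smulRight (Submodule.Quotient.mk e)),
            Ψ Bq₂ (f.smulRight (Submodule.Quotient.mk e))) := rfl
        rw [e4, hηs] at e3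
        change B₁ (ev.symm (wd.compr₂ η₁ f) : V) e + B₂ (ev.symm (wd.compr₂ η₂ f) : V) e = 0
        rw [e1, e2]
        linear_combination -e3)
      (by
        by_contra! h
        apply hη0
        have z1 := hspan η₁ fun f g => congrArg (fun c => c f g) h.1
        have z2 := hspan η₂ fun f g => congrArg (fun c => c f g) h.2
        refine LinearMap.ext fun ⟨a, c⟩ => ?_
        rw [hηs, z1, z2]; simp)
    refine ⟨l, 1, V', by simp, ?_, h2, ?_⟩
    · refine h1.trans ?_
      rintro _ ⟨u, rfl⟩
      exact (ev.symm u).2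
    · intro v hv e
      have := congrArg (fun f => f e) (h3 v hv)
      simpa using this
end

section
/- Let F be a field, E an F-vector space of finite dimension r, and B an alternating bilinear form on E with radical K of dimension p; write r − p = 2δ. Then for integers k ≥ 0 and i ≥ 0, there exists a subspace V ⊆ E of dimension k which is totally isotropic for B and satisfies dim(V ∩ K) = i if and only if k − δ ≤ i, i ≤ k, and i ≤ p. -/
open Module

theorem aux_sub {F E : Type*} [Field F] [AddCommGroup E] [Module F E] [FiniteDimensional F E]
    (K : Submodule F E) (i : ℕ) (hi : i ≤ finrank F K) :
    ∃ L : Submodule F E, L ≤ K ∧ finrank F L = i := by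
  induction i with
  | zero => exact ⟨⊥, bot_le, finrank_bot F E⟩
  | succ i ih =>
    obtain ⟨L, hL, hf⟩ := ih (by omega)
    have h : ¬ K ≤ L := fun h => by
      have := Submodule.finrank_mono h
      omega
    obtain ⟨x, hx, hxL⟩ := SetLike.not_le_iff_exists.1 h
    refine ⟨L ⊔ Submodule.span F {x}, sup_le hL ?_, ?_⟩
    · simpa using hx
    · rw [Submodule.finrank_sup_span_singleton hxL, hf]

theorem aux_iso {F E : Type*} [Field F] [AddCommGroup E] [Module F E] [FiniteDimensional F E]
    (B : LinearMap.BilinForm F E) (halt : ∀ v : E, B v v = 0) (hB : B.IsRefl)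
    (δ : ℕ) (hδ : finrank F B.ker + 2 * δ = finrank F E) (j : ℕ) (hj : j ≤ δ) :
    ∃ U : Submodule F E, finrank F U = j ∧ (∀ v ∈ U, ∀ w ∈ U, B v w = 0) ∧
      U ⊓ B.ker = ⊥ := by
  induction j with
  | zero => exact ⟨⊥, finrank_bot F E, by simp, by simp⟩
  | succ j ih =>
    obtain ⟨U, hf, hU, hUK⟩ := ih (by omega)
    have h1 := LinearMap.BilinForm.finrank_add_finrank_orthogonal' (B := B) U
    have h2 := Submodule.finrank_sup_add_finrank_inf_eq U B.ker
    rw [hUK, finrank_bot] at h1 h2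
    have h : ¬ B.orthogonal U ≤ U ⊔ B.ker := fun h => by
      have := Submodule.finrank_mono h
      omega
    obtain ⟨x, hx, hxL⟩ := SetLike.not_le_iff_exists.1 h
    have hx' : ∀ u ∈ U, B u x = 0 := hx
    have hxU : x ∉ U := fun h => hxL (Submodule.mem_sup_left h)
    have h3 := Submodule.finrank_sup_span_singleton hxL
    have h4 := Submodule.finrank_sup_span_singleton hxU
    refine ⟨U ⊔ Submodule.span F {x}, by omega, ?_, ?_⟩
    · intro v hv w hw
      obtain ⟨a, ha, b, hb, rfl⟩ := Submodule.mem_sup.1 hv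
      obtain ⟨c, hc, d, hd, rfl⟩ := Submodule.mem_sup.1 hw
      obtain ⟨s, rfl⟩ := Submodule.mem_span_singleton.1 hb
      obtain ⟨t, rfl⟩ := Submodule.mem_span_singleton.1 hd
      simp [hU a ha c hc, hx' a ha, hB _ _ (hx' c hc), halt]
    · have h5 := Submodule.finrank_sup_add_finrank_inf_eq (U ⊔ Submodule.span F {x}) B.ker
      rw [sup_right_comm] at h5
      exact Submodule.finrank_eq_zero.1 (by omega)

/-- If `B` is an alternating bilinear form on an
`r`-dimensional space `E` over a field `F`, with radical `K` of dimension `p`,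
where `r - p = 2δ`, then for `k, i ≥ 0` there exists a totally isotropic
subspace `V` of dimension `k` with `dim (V ∩ K) = i` if and only if
`k - δ ≤ i`, `i ≤ k` and `i ≤ p`. -/
theorem statement4 (F : Type*) [Field F]
    (E : Type*) [AddCommGroup E] [Module F E] [FiniteDimensional F E]
    (r p δ : ℕ) (hr : finrank F E = r)
    (B : E →ₗ[F] E →ₗ[F] F) (halt : ∀ v : E, B v v = 0)
    (K : Submodule F E) (hK : ∀ e : E, e ∈ K ↔ ∀ v : E, B e v = 0)
    (hp : finrank F K = p) (hδ : r - p = 2 * δ) (k i : ℕ) :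
    (∃ V : Submodule F E, finrank F V = k ∧
        (∀ v ∈ V, ∀ w ∈ V, B v w = 0) ∧ finrank F ↥(V ⊓ K) = i) ↔
      (k - δ ≤ i ∧ i ≤ k ∧ i ≤ p) := by
  have hB : LinearMap.BilinForm.IsRefl B := LinearMap.BilinForm.IsAlt.isRefl halt
  have hKB : K = LinearMap.ker B := by
    ext e
    rw [hK, LinearMap.mem_ker, LinearMap.ext_iff]
    rfl
  have hpr : p ≤ r := by rw [← hp, ← hr]; exact Submodule.finrank_le K
  constructor
  · rintro ⟨V, hV, hiso, hi⟩
    have h1 := LinearMap.BilinForm.finrank_add_finrank_orthogonal' (B := B) V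
    have h2 := Submodule.finrank_sup_add_finrank_inf_eq V K
    have h3 : V ⊔ K ≤ LinearMap.BilinForm.orthogonal B V := by
      refine sup_le (fun v hv w hw => hiso w hw v hv) (fun v hv w hw => ?_)
      exact hB _ _ ((hK v).1 hv w)
    have h4 := Submodule.finrank_mono h3
    have h5 : finrank F ↥(V ⊓ K) ≤ finrank F V := Submodule.finrank_mono inf_le_left
    have h6 : finrank F ↥(V ⊓ K) ≤ finrank F K := Submodule.finrank_mono inf_le_right
    rw [← hKB] at h1
    omega
  · rintro ⟨h1, h2, h3⟩
    obtain ⟨L, hL, hLi⟩ := aux_sub K i (by omega)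
    obtain ⟨U, hU, hiso, hUK⟩ := aux_iso B halt hB δ (by rw [← hKB]; omega) (k - i) (by omega)
    rw [← hKB] at hUK
    have hUL : L ⊓ U = ⊥ := by
      rw [eq_bot_iff, ← hUK]
      exact le_inf inf_le_right (inf_le_left.trans hL)
    refine ⟨L ⊔ U, ?_, ?_, ?_⟩
    · have := Submodule.finrank_sup_add_finrank_inf_eq L U
      rw [hUL, finrank_bot] at this
      omega
    · intro v hv w hw
      obtain ⟨a, ha, b, hb, rfl⟩ := Submodule.mem_sup.1 hv
      obtain ⟨c, hc, d, hd, rfl⟩ := Submodule.mem_sup.1 hw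
      have e1 := (hK a).1 (hL ha)
      have e2 : B b c = 0 := hB _ _ ((hK c).1 (hL hc) b)
      simp [e1, e2, hiso b hb d hd]
    · rw [sup_inf_assoc_of_le U hL, hUK, sup_bot_eq, hLi]
end

section
/- Let F be a field, E an F-vector space of finite dimension r, and B an alternating bilinear form on E with radical K of dimension p; write r − p = 2δ. Let V ⊆ E be a subspace of dimension k which is totally isotropic for B, and set i = dim(V ∩ K). If i ≥ 1 and i > k − δ, then the orthogonal complement V^⊥ = {e ∈ E : B(v, e) = 0 for all v ∈ V} is not contained in V + K; moreover there exists a subspace V′ ⊆ E of dimension k which is totally isotropic for B and satisfies dim(V′ ∩ K) = i − 1 and dim(V ∩ V′) = k − 1. -/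
open Module

theorem aux_sup {F E : Type*} [Field F] [AddCommGroup E] [Module F E] [FiniteDimensional F E]
    (W : Submodule F E) (e : E) (he : e ∉ W) :
    finrank F ↥(W ⊔ Submodule.span F {e}) = finrank F W + 1 := by
  have h0 : e ≠ 0 := by rintro rfl; exact he W.zero_mem
  have h := Submodule.finrank_sup_add_finrank_inf_eq W (Submodule.span F {e})
  have hd : W ⊓ Submodule.span F {e} = ⊥ := by
    rw [eq_bot_iff]
    rintro x ⟨hx, hx'⟩
    obtain ⟨c, rfl⟩ := Submodule.mem_span_singleton.1 hx'
    by_cases hc : c = 0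
    · simp [hc]
    · exact absurd ((W.smul_mem_iff hc).1 hx) he
  rw [hd, finrank_span_singleton h0, finrank_bot] at h
  omega

theorem aux_ker {F E : Type*} [Field F] [AddCommGroup E] [Module F E] [FiniteDimensional F E]
    (S : Submodule F E) (u : E) (hu : u ∈ S) (f : E →ₗ[F] F) (hf : f u = 1) :
    finrank F ↥(S ⊓ LinearMap.ker f) + 1 = finrank F S := by
  rw [← aux_sup (S ⊓ LinearMap.ker f) u (by simp [hf])]
  suffices h : S ⊓ LinearMap.ker f ⊔ Submodule.span F {u} = S by rw [h]
  apply le_antisymm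
  · exact sup_le inf_le_left (by simpa [Submodule.span_le] using hu)
  · intro x hx
    rw [Submodule.mem_sup]
    refine ⟨x - f x • u, ⟨S.sub_mem hx (S.smul_mem _ hu), by simp [hf]⟩, f x • u,
      Submodule.smul_mem _ _ (Submodule.mem_span_singleton_self u), by simp⟩

theorem statement6 (F : Type*) [Field F]
    (E : Type*) [AddCommGroup E] [Module F E] [FiniteDimensional F E]
    (r p δ k i : ℕ) (hr : finrank F E = r)
    (B : E →ₗ[F] E →ₗ[F] F) (halt : ∀ v : E, B v v = 0)
    (K : Submodule F E) (hK : ∀ e : E, e ∈ K ↔ ∀ v : E, B e v = 0)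
    (hp : finrank F K = p) (hδ : r - p = 2 * δ)
    (V : Submodule F E) (hk : finrank F V = k)
    (hV : ∀ v ∈ V, ∀ w ∈ V, B v w = 0)
    (hi : finrank F ↥(V ⊓ K) = i) (hi1 : 1 ≤ i) (hi2 : k - δ < i)
    (Vperp : Submodule F E)
    (hVperp : ∀ e : E, e ∈ Vperp ↔ ∀ v ∈ V, B v e = 0) :
    ¬ Vperp ≤ V ⊔ K ∧
      ∃ V' : Submodule F E, finrank F V' = k ∧
        (∀ v ∈ V', ∀ w ∈ V', B v w = 0) ∧
        finrank F ↥(V' ⊓ K) = i - 1 ∧ finrank F ↥(V ⊓ V') = k - 1 := by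
  have hA : B.IsAlt := halt
  have hneg : ∀ x y, B x y = - B y x := fun x y => (hA.neg y x).symm
  have hnot : ¬ Vperp ≤ V ⊔ K := by
    intro hle
    have h1 := LinearMap.BilinForm.finrank_add_finrank_orthogonal (B := B) hA.isRefl V
    have e1 : LinearMap.BilinForm.orthogonal B V = Vperp := by
      ext x
      rw [hVperp]
      rfl
    have e2 : LinearMap.BilinForm.orthogonal B ⊤ = K := by
      ext x
      rw [hK, LinearMap.BilinForm.mem_orthogonal_iff]
      constructor
      · intro h v
        rw [hneg, show B v x = 0 from h v trivial, neg_zero]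
      · intro h v _
        change B v x = 0
        rw [hneg, h, neg_zero]
    rw [e1, e2] at h1
    have h2 := Submodule.finrank_mono hle
    have h3 := Submodule.finrank_sup_add_finrank_inf_eq V K
    have h4 := Submodule.finrank_le K
    omega
  refine ⟨hnot, ?_⟩
  obtain ⟨e, he, heVK⟩ := SetLike.not_le_iff_exists.1 hnot
  have hne : V ⊓ K ≠ ⊥ := by
    intro h
    rw [h, finrank_bot] at hi
    omega
  obtain ⟨u, hu, hu0⟩ := Submodule.exists_mem_ne_zero_of_ne_bot hne
  obtain ⟨f, hf⟩ : ∃ f : E →ₗ[F] F, f u = 1 := by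
    obtain ⟨f, hf⟩ := Module.Projective.exists_dual_ne_zero F hu0
    exact ⟨(f u)⁻¹ • f, by simp [hf]⟩
  have d1 := aux_ker V u hu.1 f hf
  have d2 := aux_ker (V ⊓ K) u hu f hf
  set W := V ⊓ LinearMap.ker f with hW
  have hWV : W ≤ V := inf_le_left
  have heV : e ∉ V := fun h => heVK (Submodule.mem_sup_left h)
  have d3 := aux_sup W e (fun h => heV (hWV h))
  have hVe := (hVperp e).1 he
  refine ⟨W ⊔ Submodule.span F {e}, by omega, ?_, ?_, ?_⟩
  · intro v hv w hw
    obtain ⟨a, ha, b, hb, rfl⟩ := Submodule.mem_sup.1 hv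
    obtain ⟨c, rfl⟩ := Submodule.mem_span_singleton.1 hb
    obtain ⟨a', ha', b', hb', rfl⟩ := Submodule.mem_sup.1 hw
    obtain ⟨c', rfl⟩ := Submodule.mem_span_singleton.1 hb'
    simp [hV a (hWV ha) a' (hWV ha'), hVe a (hWV ha), hneg e a', hVe a' (hWV ha'), halt]
  · have : (W ⊔ Submodule.span F {e}) ⊓ K = V ⊓ K ⊓ LinearMap.ker f := by
      apply le_antisymm
      · rintro x ⟨hx, hxK⟩
        obtain ⟨a, ha, b, hb, rfl⟩ := Submodule.mem_sup.1 hx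
        obtain ⟨c, rfl⟩ := Submodule.mem_span_singleton.1 hb
        by_cases hc : c = 0
        · subst hc
          simp only [zero_smul, add_zero] at hxK ⊢
          exact ⟨⟨ha.1, hxK⟩, ha.2⟩
        · refine absurd (((V ⊔ K).smul_mem_iff hc).1 ?_) heVK
          have := (V ⊔ K).sub_mem (Submodule.mem_sup_right hxK) (Submodule.mem_sup_left (hWV ha))
          simpa using this
      · rintro x ⟨⟨h1, h2⟩, h3⟩
        exact ⟨Submodule.mem_sup_left ⟨h1, h3⟩, h2⟩
    rw [this]
    omega
  · have : V ⊓ (W ⊔ Submodule.span F {e}) = W := by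
      apply le_antisymm
      · rintro x ⟨hxV, hx⟩
        obtain ⟨a, ha, b, hb, rfl⟩ := Submodule.mem_sup.1 hx
        obtain ⟨c, rfl⟩ := Submodule.mem_span_singleton.1 hb
        by_cases hc : c = 0
        · subst hc
          simpa using ha
        · refine absurd ((V.smul_mem_iff hc).1 ?_) heV
          simpa using V.sub_mem hxV (hWV ha)
      · exact le_inf hWV le_sup_left
    rw [this]
    omega
end

section
/- Let F be a field, let V and W be finite-dimensional F-vector spaces with dim V = k and dim W = n, and let ψ : W → V* be a surjective linear map to the dual space of V. Then the set {φ ∈ Hom_F(V, W) : (ψ(φ(v₁)))(v₂) = (ψ(φ(v₂)))(v₁) for all v₁, v₂ ∈ V} is a linear subspace of Hom_F(V, W) of dimension kn − k(k−1)/2. -/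
open Module

/-- Let `V, W` be finite-dimensional vector spaces over a
field `F` with `dim V = k`, `dim W = n`, and let `ψ : W → V*` be a surjective
linear map.  Then the set `{φ : V →ₗ W | ψ ∘ φ is symmetric}` is a linear
subspace of `Hom(V, W)` of dimension `k * n - k * (k - 1) / 2`. -/
theorem statement8 (F : Type*) [Field F]
    (V W : Type*) [AddCommGroup V] [Module F V] [AddCommGroup W] [Module F W]
    [FiniteDimensional F V] [FiniteDimensional F W]
    (k n : ℕ) (hk : finrank F V = k) (hn : finrank F W = n)
    (ψ : W →ₗ[F] Module.Dual F V) (hψ : Function.Surjective ψ) :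
    ∃ S : Submodule F (V →ₗ[F] W),
      (S : Set (V →ₗ[F] W)) =
        {φ : V →ₗ[F] W | ∀ v₁ v₂ : V, ψ (φ v₁) v₂ = ψ (φ v₂) v₁} ∧
      finrank F S = k * n - k * (k - 1) / 2 := by
  classical
  let b : Basis (Fin k) F V := finBasisOfFinrankEq F V hk
  let T : (V →ₗ[F] W) →ₗ[F] ((Σ i : Fin k, {j : Fin k // j < i}) → F) :=
    { toFun := fun φ p => ψ (φ (b p.1)) (b p.2.1) - ψ (φ (b p.2.1)) (b p.1)
      map_add' := by
        intro x y
        ext p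
        simp only [LinearMap.add_apply, map_add, Pi.add_apply]
        ring
      map_smul' := by
        intro c x
        ext p
        simp only [LinearMap.smul_apply, map_smul, Pi.smul_apply, smul_eq_mul, RingHom.id_apply]
        ring }
  have hT : ∀ φ p, T φ p = ψ (φ (b p.1)) (b p.2.1) - ψ (φ (b p.2.1)) (b p.1) :=
    fun _ _ => rfl
  have hsurj : Function.Surjective T := by
    intro c
    choose g hg using hψ
    refine ⟨b.constr F (fun i => g (b.constr F
      (fun j => if h : j < i then c ⟨i, ⟨j, h⟩⟩ else 0))), ?_⟩
    ext ⟨i, j, h⟩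
    rw [hT]
    simp only [Basis.constr_basis, hg]
    simp [h, h.le, not_lt.mpr h.le]
  refine ⟨LinearMap.ker T, ?_, ?_⟩
  · ext φ
    simp only [SetLike.mem_coe, LinearMap.mem_ker, Set.mem_setOf_eq]
    constructor
    · intro h
      have h1 : ∀ i j, j < i → ψ (φ (b i)) (b j) = ψ (φ (b j)) (b i) := by
        intro i j hij
        have := congrFun h ⟨i, ⟨j, hij⟩⟩
        rw [hT] at this
        exact sub_eq_zero.mp this
      have h2 : (ψ ∘ₗ φ) = (ψ ∘ₗ φ).flip := by
        refine b.ext fun i => b.ext fun j => ?_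
        simp only [LinearMap.comp_apply, LinearMap.flip_apply]
        rcases lt_trichotomy i j with hij | hij | hij
        · exact (h1 _ _ hij).symm
        · rw [hij]
        · exact h1 _ _ hij
      intro v₁ v₂
      exact LinearMap.congr_fun (LinearMap.congr_fun h2 v₁) v₂
    · intro h
      ext p
      rw [hT, h, sub_self]
      rfl
  · have h := LinearMap.finrank_range_add_finrank_ker T
    rw [LinearMap.range_eq_top.mpr hsurj, finrank_top, Module.finrank_linearMap, hk, hn,
      Module.finrank_fintype_fun_eq_card] at h
    have hc : Fintype.card (Σ i : Fin k, {j : Fin k // j < i}) = k * (k - 1) / 2 := by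
      rw [Fintype.card_sigma, ← Finset.sum_range_id, ← Fin.sum_univ_eq_sum_range (fun i => i)]
      refine Finset.sum_congr rfl fun i _ => ?_
      rw [Fintype.card_subtype, Finset.filter_gt_eq_Iio, Fin.card_Iio]
    rw [hc] at h
    omega
end

section
/- Let F be a field, let V and W be finite-dimensional F-vector spaces with dim V = k and dim W = n, and let ψ₁, …, ψ_m : W → V* be surjective linear maps to the dual space of V. Suppose there exist a 2-dimensional subspace V′ ⊆ V and scalars λ₁, …, λ_m ∈ F, not all zero, such that Σᵢ λᵢ·(ψᵢ(w))(v) = 0 for all v ∈ V′ and all w ∈ W. Then the subspace {φ ∈ Hom_F(V, W) : ψᵢ∘φ is symmetric for all i = 1, …, m} of Hom_F(V, W) has dimension strictly greater than kn − m·(k(k−1)/2). -/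
open Module

/-- (Lemma `msg-easy` of Osserman.)  Let `V, W` be
finite-dimensional vector spaces over a field `F` with `dim V = k`,
`dim W = n`, and let `ψ₁, …, ψ_m : W → V*` be surjective linear maps.  If
there exist a `2`-dimensional subspace `V' ⊆ V` and scalars `λ₁, …, λ_m`,
not all zero, with `∑ i, λᵢ ψᵢ(w)(v) = 0` for all `v ∈ V'` and `w ∈ W`,
then the subspace `{φ | ψᵢ ∘ φ symmetric for all i}` of `Hom(V, W)` has
dimension strictly greater than `k n - m·(k(k-1)/2)`. -/
theorem statement9 (F : Type*) [Field F]
    (V W : Type*) [AddCommGroup V] [Module F V] [AddCommGroup W] [Module F W]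
    [FiniteDimensional F V] [FiniteDimensional F W]
    (k n m : ℕ) (hk : finrank F V = k) (hn : finrank F W = n)
    (ψ : Fin m → (W →ₗ[F] Module.Dual F V))
    (hψ : ∀ i : Fin m, Function.Surjective (ψ i))
    (V' : Submodule F V) (hV' : finrank F V' = 2)
    (l : Fin m → F) (hl : l ≠ 0)
    (hrel : ∀ v ∈ V', ∀ w : W, ∑ i : Fin m, l i * ψ i w v = 0)
    (S : Submodule F (V →ₗ[F] W))
    (hS : ∀ φ : V →ₗ[F] W, φ ∈ S ↔
      ∀ i : Fin m, ∀ v₁ v₂ : V, ψ i (φ v₁) v₂ = ψ i (φ v₂) v₁) :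
    ((k * n : ℕ) : ℤ) - ((m * (k * (k - 1) / 2) : ℕ) : ℤ)
      < (finrank F S : ℤ) := by
  classical
  obtain ⟨b, p, q, hpq, hp, hq⟩ : ∃ (b : Basis (Fin k) F V) (p q : Fin k),
      p < q ∧ b p ∈ V' ∧ b q ∈ V' := by
    let c := finBasisOfFinrankEq F V' hV'
    have hc : LinearIndependent F (fun i => (c i : V)) :=
      c.linearIndependent.map' V'.subtype V'.ker_subtype
    let B := Basis.sumExtend hc
    let e := B.indexEquiv (finBasisOfFinrankEq F V hk)
    have hB : ∀ i, B (Sum.inl i) = c i := fun i => by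
      simp [B, Basis.sumExtend]
      rfl
    have hmem : ∀ i, (B.reindex e) (e (Sum.inl i)) ∈ V' := fun i => by
      rw [Basis.reindex_apply, Equiv.symm_apply_apply, hB]
      exact (c i).2
    have hne : e (Sum.inl 0) ≠ e (Sum.inl 1) := by simp
    rcases lt_or_gt_of_ne hne with h | h
    · exact ⟨B.reindex e, _, _, h, hmem 0, hmem 1⟩
    · exact ⟨B.reindex e, _, _, h, hmem 1, hmem 0⟩
  let T : (V →ₗ[F] W) →ₗ[F] (Fin m × (Σ a : Fin k, Fin a) → F) :=
    { toFun := fun φ x => ψ x.1 (φ (b x.2.1)) (b (x.2.2.castLT (x.2.2.2.trans x.2.1.2)))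
        - ψ x.1 (φ (b (x.2.2.castLT (x.2.2.2.trans x.2.1.2)))) (b x.2.1)
      map_add' := fun φ φ' => by
        ext x
        simp only [LinearMap.add_apply, map_add, Pi.add_apply]
        ring
      map_smul' := fun r φ => by
        ext x
        simp only [LinearMap.smul_apply, map_smul, Pi.smul_apply, smul_eq_mul, RingHom.id_apply]
        ring }
  have hT : ∀ φ i (a c : Fin k) (h : c < a), T φ (i, ⟨a, ⟨c, h⟩⟩) =
      ψ i (φ (b a)) (b c) - ψ i (φ (b c)) (b a) := fun _ _ _ _ _ => rfl
  have hker : LinearMap.ker T = S := by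
    ext φ
    rw [hS, LinearMap.mem_ker]
    constructor
    · intro h i
      have key : ∀ a c : Fin k, c < a → ψ i (φ (b a)) (b c) = ψ i (φ (b c)) (b a) := by
        intro a c hca
        have := hT φ i a c hca
        rw [h] at this
        exact sub_eq_zero.mp this.symm
      have : (ψ i ∘ₗ φ) = (ψ i ∘ₗ φ).flip := by
        refine b.ext fun a => b.ext fun c => ?_
        simp only [LinearMap.flip_apply, LinearMap.comp_apply]
        rcases lt_trichotomy a c with h | h | h
        · exact (key _ _ h).symm
        · rw [h]
        · exact key _ _ h
      intro v₁ v₂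
      exact LinearMap.congr_fun (LinearMap.congr_fun this v₁) v₂
    · intro h
      ext x
      exact sub_eq_zero.mpr (h _ _ _)
  have hlt : finrank F (LinearMap.range T) < m * (k * (k - 1) / 2) := by
    have hcard : finrank F (Fin m × (Σ a : Fin k, Fin a) → F) = m * (k * (k - 1) / 2) := by
      rw [Module.finrank_fintype_fun_eq_card, Fintype.card_prod, Fintype.card_sigma]
      simp only [Fintype.card_fin]
      rw [Fin.sum_univ_eq_sum_range (fun i => i) k, Finset.sum_range_id]
    rw [← hcard]
    apply Submodule.finrank_lt
    intro htop
    obtain ⟨i₀, hi₀⟩ := Function.ne_iff.mp hl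
    obtain ⟨φ, hφ⟩ := LinearMap.range_eq_top.mp htop (Pi.single (i₀, ⟨q, ⟨p, hpq⟩⟩) 1)
    have h1 : ∑ i, l i * T φ (i, ⟨q, ⟨p, hpq⟩⟩) = 0 := by
      simp only [hT, mul_sub, Finset.sum_sub_distrib]
      rw [hrel _ hp, hrel _ hq, sub_zero]
    rw [hφ] at h1
    rw [Finset.sum_eq_single i₀] at h1
    · simp at h1
      exact hi₀ h1
    · intro i _ hi
      rw [Pi.single_eq_of_ne, mul_zero]
      intro h
      exact hi (congrArg Prod.fst h)
    · simp
  have hrn := LinearMap.finrank_range_add_finrank_ker T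
  rw [hker, Module.finrank_linearMap, hk, hn] at hrn
  rw [← hrn]
  push_cast at *
  zify at hlt
  push_cast at hlt
  linarith
end

section
/- Let F be a field and let k ≤ n be positive integers. Let A be a k×n matrix over F in generalized Jordan normal form, with diagonal entries λ₁, …, λ_k and superdiagonal entries ε₁, …, ε_{k−1} ∈ {0,1} (conventions ε₀ = ε_k = 0). Suppose there exist scalars c_{i,j}, c′_{i,j} ∈ F for 1 ≤ i < j ≤ k such that for every n×k matrix B over F one has Σ_{i<j} c_{i,j}(B_{i,j} − B_{j,i}) = Σ_{i<j} c′_{i,j}((AB)_{i,j} − (AB)_{j,i}). Then, with the conventions c′_{a,a} = 0 and c′_{0,b} = 0: (1) for all 1 ≤ a < b ≤ k, c_{a,b} = c′_{a,b}·λ_a + c′_{a−1,b}·ε_{a−1} and c_{a,b} = c′_{a,b}·λ_b + c′_{a,b−1}·ε_{b−1}; and (2) for all 1 ≤ a < k, c′_{a,a+1}·ε_a = 0. -/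
theorem aux_tri {F : Type*} [Field F] (k : ℕ) (g : ℕ → ℕ → F) :
    ∑ i ∈ Finset.Icc 1 k, ∑ j ∈ Finset.Icc (i + 1) k, g i j
      = ∑ i ∈ Finset.Icc 1 k, ∑ j ∈ Finset.Icc 1 k, if i < j then g i j else 0 := by
  refine Finset.sum_congr rfl fun i _ => ?_
  rw [← Finset.sum_filter]
  refine Finset.sum_congr ?_ fun _ _ => rfl
  ext j
  simp only [Finset.mem_Icc, Finset.mem_filter]
  omega

theorem aux_col {F : Type*} [Field F] (k p : ℕ) (hp : 1 ≤ p) (hpk : p ≤ k) (g h : ℕ → F)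
    (x y : F) (h1 : h p = x) (h2 : 1 < p → h (p - 1) = y) (h3 : p = 1 → y = 0)
    (h0 : ∀ i, 1 ≤ i → i ≤ k → i ≠ p → i + 1 ≠ p → h i = 0) :
    ∑ i ∈ Finset.Icc 1 k, g i * h i = g p * x + g (p - 1) * y := by
  rw [← Finset.add_sum_erase _ _ (Finset.mem_Icc.2 ⟨hp, hpk⟩), h1]
  congr 1
  by_cases hp1 : p = 1
  · rw [h3 hp1, mul_zero]
    refine Finset.sum_eq_zero fun i hi => ?_
    simp only [Finset.mem_erase, Finset.mem_Icc] at hi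
    rw [h0 i (by omega) (by omega) (by omega) (by omega), mul_zero]
  · rw [Finset.sum_eq_single (p - 1), h2 (by omega)]
    · intro i hi hne
      simp only [Finset.mem_erase, Finset.mem_Icc] at hi
      rw [h0 i (by omega) (by omega) (by omega) (by omega), mul_zero]
    · intro hn
      exact absurd (by simp only [Finset.mem_erase, Finset.mem_Icc]; omega) hn

theorem aux_pick {F : Type*} [Field F] (k q : ℕ) (hq : 1 ≤ q) (hqk : q ≤ k)
    (d : ℕ → ℕ → F) (u : ℕ → F) :
    ∑ i ∈ Finset.Icc 1 k, ∑ j ∈ Finset.Icc 1 k, (if i < j then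
        d i j * (u i * (if j = q then 1 else 0) - u j * (if i = q then 1 else 0)) else 0)
      = ∑ i ∈ Finset.Icc 1 k, (if i < q then d i q else 0) * u i
        - ∑ j ∈ Finset.Icc 1 k, (if q < j then d q j else 0) * u j := by
  have hm : q ∈ Finset.Icc 1 k := Finset.mem_Icc.2 ⟨hq, hqk⟩
  have e : ∀ i j : ℕ, (if i < j then
        d i j * (u i * (if j = q then 1 else 0) - u j * (if i = q then 1 else 0)) else 0)
      = (if j = q then (if i < j then d i j else 0) * u i else 0)
        - (if i = q then (if i < j then d i j else 0) * u j else 0) := by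
    intro i j
    split_ifs <;> ring
  simp only [e, Finset.sum_sub_distrib]
  congr 1
  · refine Finset.sum_congr rfl fun i _ => ?_
    rw [Finset.sum_ite_eq' _ q, if_pos hm]
  · rw [Finset.sum_comm]
    refine Finset.sum_congr rfl fun i _ => ?_
    rw [Finset.sum_ite_eq' _ q, if_pos hm]

/-- (Equations (mess) and (no-mess) in the proof of
Lemma `technical-first` of Osserman.)  Let `A` be a `k × n` matrix over a
field `F` (indexed by `{1, …, k} × {1, …, n}`) in generalized Jordan normal
form, with diagonal entries `λ₁, …, λ_k` and superdiagonal entries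
`ε₁, …, ε_{k-1} ∈ {0, 1}` (conventions `ε₀ = ε_k = 0`).  Suppose scalars
`c_{i,j}, c'_{i,j}` (`1 ≤ i < j ≤ k`) satisfy, for every `n × k` matrix `B`,
`∑_{i<j} c_{i,j}(B_{i,j} - B_{j,i}) = ∑_{i<j} c'_{i,j}((AB)_{i,j} - (AB)_{j,i})`.
Then (with the conventions `c'_{a,a} = 0`, `c'_{0,b} = 0`):
(1) for `1 ≤ a < b ≤ k`, `c_{a,b} = c'_{a,b} λ_a + c'_{a-1,b} ε_{a-1}` and
`c_{a,b} = c'_{a,b} λ_b + c'_{a,b-1} ε_{b-1}`; and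
(2) for `1 ≤ a < k`, `c'_{a,a+1} ε_a = 0`. -/
theorem statement10 (F : Type*) [Field F] (k n : ℕ) (hk : 1 ≤ k) (hkn : k ≤ n)
    (A : ℕ → ℕ → F) (lam eps : ℕ → F)
    (hlam : ∀ i, 1 ≤ i → i ≤ k → lam i = A i i)
    (heps : ∀ i, 1 ≤ i → i < k → eps i = A i (i + 1))
    (heps0 : eps 0 = 0) (hepsk : eps k = 0)
    (heps01 : ∀ i, 1 ≤ i → i < k → eps i = 0 ∨ eps i = 1)
    (hAzero : ∀ i j, 1 ≤ i → i ≤ k → 1 ≤ j → j ≤ k → j ≠ i → j ≠ i + 1 →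
      A i j = 0)
    (hblock : ∀ i, 1 ≤ i → i < k → eps i = 1 → lam (i + 1) = lam i)
    (c c' : ℕ → ℕ → F)
    (hc'diag : ∀ a, c' a a = 0) (hc'zero : ∀ b, c' 0 b = 0)
    (hident : ∀ B : ℕ → ℕ → F,
      ∑ i ∈ Finset.Icc 1 k, ∑ j ∈ Finset.Icc (i + 1) k,
        c i j * (B i j - B j i)
      = ∑ i ∈ Finset.Icc 1 k, ∑ j ∈ Finset.Icc (i + 1) k,
          c' i j * ((∑ l ∈ Finset.Icc 1 n, A i l * B l j)
            - (∑ l ∈ Finset.Icc 1 n, A j l * B l i))) :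
    (∀ a b, 1 ≤ a → a < b → b ≤ k →
      c a b = c' a b * lam a + c' (a - 1) b * eps (a - 1) ∧
      c a b = c' a b * lam b + c' a (b - 1) * eps (b - 1)) ∧
    (∀ a, 1 ≤ a → a < k → c' a (a + 1) * eps a = 0) := by
  have key : ∀ p q, 1 ≤ p → p ≤ k → 1 ≤ q → q ≤ k →
      (if p < q then c p q else 0) - (if q < p then c q p else 0)
      = ((if p < q then c' p q else 0) * lam p
          + (if p - 1 < q then c' (p - 1) q else 0) * eps (p - 1))
        - ((if q < p then c' q p else 0) * lam p
          + (if q < p - 1 then c' q (p - 1) else 0) * eps (p - 1)) := by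
    intro p q hp hpk hq hqk
    have hm : p ∈ Finset.Icc 1 k := Finset.mem_Icc.2 ⟨hp, hpk⟩
    have hmn : p ∈ Finset.Icc 1 n := Finset.mem_Icc.2 ⟨hp, hpk.trans hkn⟩
    have H := hident (fun l j => (if l = p then 1 else 0) * (if j = q then 1 else 0))
    have hs : ∀ i j, ∑ l ∈ Finset.Icc 1 n,
        A i l * ((if l = p then 1 else 0) * (if j = q then (1 : F) else 0))
        = A i p * (if j = q then 1 else 0) := by
      intro i j
      rw [Finset.sum_eq_single p]
      · simp
      · intro l _ hl
        simp [hl]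
      · intro h
        exact absurd hmn h
    simp only [hs] at H
    rw [aux_tri, aux_tri, aux_pick k q hq hqk c (fun i => if i = p then 1 else 0),
      aux_pick k q hq hqk c' (fun i => A i p)] at H
    have col : ∀ g : ℕ → F, ∑ i ∈ Finset.Icc 1 k, g i * A i p
        = g p * lam p + g (p - 1) * eps (p - 1) := by
      intro g
      refine aux_col k p hp hpk g (fun i => A i p) _ _ (hlam p hp hpk).symm ?_ ?_ ?_
      · intro h
        rw [heps (p - 1) (by omega) (by omega), Nat.sub_add_cancel hp]
      · rintro rfl
        exact heps0
      · intro i h1 h2 h3 h4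
        exact hAzero i p h1 h2 hp hpk (Ne.symm h3) (Ne.symm h4)
    have one : ∀ g : ℕ → F, ∑ i ∈ Finset.Icc 1 k, g i * (if i = p then 1 else 0) = g p := by
      intro g
      simp [hp, hpk]
    rw [one (fun i => if i < q then c i q else 0), one (fun i => if q < i then c q i else 0),
      col (fun i => if i < q then c' i q else 0), col (fun i => if q < i then c' q i else 0)] at H
    exact H
  refine ⟨fun a b ha hab hb => ⟨?_, ?_⟩, fun a ha hak => ?_⟩
  · have h := key a b ha (by omega) (by omega) hb
    rw [if_pos hab, if_neg (by omega), if_pos hab, if_pos (by omega), if_neg (by omega),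
      if_neg (by omega)] at h
    linear_combination h
  · have h := key b a (by omega) hb ha (by omega)
    rw [if_neg (by omega), if_pos hab, if_neg (by omega), if_neg (by omega), if_pos hab] at h
    by_cases h1 : a < b - 1
    · rw [if_pos h1] at h
      linear_combination -h
    · have h2 : b - 1 = a := by omega
      rw [if_neg h1] at h
      rw [h2, hc'diag]
      linear_combination -h
  · have h := key (a + 1) (a + 1) (by omega) (by omega) (by omega) (by omega)
    simp at h
    rcases h with h | h <;> simp [h]
end

section
/- Let F be a field and let k ≤ n be positive integers. Let A be a k×n matrix over F in generalized Jordan normal form, with diagonal entries λ₁, …, λ_k and superdiagonal entries ε₁, …, ε_{k−1} ∈ {0,1}. Suppose there exist scalars c_{i,j}, c′_{i,j} ∈ F for 1 ≤ i < j ≤ k such that for every n×k matrix B over F one has Σ_{i<j} c_{i,j}(B_{i,j} − B_{j,i}) = Σ_{i<j} c′_{i,j}((AB)_{i,j} − (AB)_{j,i}). If i < j are indices lying in the same Jordan block of A, i.e. ε_i = ε_{i+1} = ⋯ = ε_{j−1} = 1, then c′_{i,j} = 0. -/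
def skewD {F : Type*} [Field F] (f : ℕ → ℕ → F) (i j : ℕ) : F :=
  (if i < j then f i j else 0) - (if j < i then f j i else 0)

lemma skew_sum {F : Type*} [Field F] (k : ℕ) (f M : ℕ → ℕ → F) :
    ∑ i ∈ Finset.Icc 1 k, ∑ j ∈ Finset.Icc (i + 1) k, f i j * (M i j - M j i)
      = ∑ i ∈ Finset.Icc 1 k, ∑ j ∈ Finset.Icc 1 k, skewD f i j * M i j := by
  have h1 : ∀ g : ℕ → ℕ → F, ∑ i ∈ Finset.Icc 1 k, ∑ j ∈ Finset.Icc (i + 1) k, g i j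
      = ∑ i ∈ Finset.Icc 1 k, ∑ j ∈ Finset.Icc 1 k, if i < j then g i j else 0 := by
    intro g
    refine Finset.sum_congr rfl fun i _ => ?_
    rw [← Finset.sum_filter]
    refine Finset.sum_congr ?_ fun _ _ => rfl
    ext j
    simp only [Finset.mem_Icc, Finset.mem_filter]
    omega
  have h2 : ∑ i ∈ Finset.Icc 1 k, ∑ j ∈ Finset.Icc 1 k, skewD f i j * M i j
      = (∑ i ∈ Finset.Icc 1 k, ∑ j ∈ Finset.Icc 1 k, if i < j then f i j * M i j else 0)
      - ∑ i ∈ Finset.Icc 1 k, ∑ j ∈ Finset.Icc 1 k, if j < i then f j i * M i j else 0 := by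
    simp only [← Finset.sum_sub_distrib]
    refine Finset.sum_congr rfl fun i _ => Finset.sum_congr rfl fun j _ => ?_
    unfold skewD
    split_ifs <;> ring
  rw [h2, Finset.sum_comm (f := fun i j => if j < i then f j i * M i j else 0)]
  simp only [mul_sub, Finset.sum_sub_distrib]
  rw [h1, h1]

lemma prod_unit {F : Type*} [Field F] (k n : ℕ) (hkn : k ≤ n) (A D : ℕ → ℕ → F) (p q : ℕ)
    (hp : 2 ≤ p) (hpk : p ≤ k) (hq : 1 ≤ q) (hqk : q ≤ k)
    (hA : ∀ i j, 1 ≤ i → i ≤ k → 1 ≤ j → j ≤ k → j ≠ i → j ≠ i + 1 → A i j = 0) :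
    ∑ i ∈ Finset.Icc 1 k, ∑ j ∈ Finset.Icc 1 k, D i j *
      ∑ l ∈ Finset.Icc 1 n, A i l * (if l = p ∧ j = q then 1 else 0)
      = D p q * A p p + D (p - 1) q * A (p - 1) p := by
  have h : ∀ i ∈ Finset.Icc 1 k, ∑ j ∈ Finset.Icc 1 k, D i j *
      ∑ l ∈ Finset.Icc 1 n, A i l * (if l = p ∧ j = q then 1 else 0) = D i q * A i p := by
    intro i _
    rw [Finset.sum_eq_single q]
    · rw [Finset.sum_eq_single p]
      · simp
      · intro b _ hb; simp [hb]
      · intro hb; exact absurd (Finset.mem_Icc.2 ⟨by omega, by omega⟩) hb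
    · intro b _ hb; simp [hb]
    · intro hb; exact absurd (Finset.mem_Icc.2 ⟨by omega, by omega⟩) hb
  rw [Finset.sum_congr rfl h]
  apply Finset.sum_eq_add_of_mem p (p - 1)
  · exact Finset.mem_Icc.2 ⟨by omega, by omega⟩
  · exact Finset.mem_Icc.2 ⟨by omega, by omega⟩
  · omega
  · intro i hi hne
    rw [Finset.mem_Icc] at hi
    rw [hA i p hi.1 hi.2 (by omega) hpk (by omega) (by omega), mul_zero]

/-- (Part (i) of Lemma `technical-first` of Osserman.)
Let `A` be a `k × n` matrix over a field `F` (indexed by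
`{1, …, k} × {1, …, n}`) in generalized Jordan normal form, with diagonal
entries `λ₁, …, λ_k` and superdiagonal entries `ε₁, …, ε_{k-1} ∈ {0, 1}`
(conventions `ε₀ = ε_k = 0`).  Suppose scalars `c_{i,j}, c'_{i,j}`
(`1 ≤ i < j ≤ k`) satisfy, for every `n × k` matrix `B`,
`∑_{i<j} c_{i,j}(B_{i,j} - B_{j,i}) = ∑_{i<j} c'_{i,j}((AB)_{i,j} - (AB)_{j,i})`.
If `i < j` lie in the same Jordan block of `A`, i.e.
`ε_i = ε_{i+1} = ⋯ = ε_{j-1} = 1`, then `c'_{i,j} = 0`. -/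
theorem statement11 (F : Type*) [Field F] (k n : ℕ) (hk : 1 ≤ k) (hkn : k ≤ n)
    (A : ℕ → ℕ → F) (lam eps : ℕ → F)
    (hlam : ∀ i, 1 ≤ i → i ≤ k → lam i = A i i)
    (heps : ∀ i, 1 ≤ i → i < k → eps i = A i (i + 1))
    (heps0 : eps 0 = 0) (hepsk : eps k = 0)
    (heps01 : ∀ i, 1 ≤ i → i < k → eps i = 0 ∨ eps i = 1)
    (hAzero : ∀ i j, 1 ≤ i → i ≤ k → 1 ≤ j → j ≤ k → j ≠ i → j ≠ i + 1 →
      A i j = 0)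
    (hblock : ∀ i, 1 ≤ i → i < k → eps i = 1 → lam (i + 1) = lam i)
    (c c' : ℕ → ℕ → F)
    (hident : ∀ B : ℕ → ℕ → F,
      ∑ i ∈ Finset.Icc 1 k, ∑ j ∈ Finset.Icc (i + 1) k,
        c i j * (B i j - B j i)
      = ∑ i ∈ Finset.Icc 1 k, ∑ j ∈ Finset.Icc (i + 1) k,
          c' i j * ((∑ l ∈ Finset.Icc 1 n, A i l * B l j)
            - (∑ l ∈ Finset.Icc 1 n, A j l * B l i))) :
    ∀ i j, 1 ≤ i → i < j → j ≤ k → (∀ l, i ≤ l → l < j → eps l = 1) →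
      c' i j = 0 := by
  have key : ∀ p q, 2 ≤ p → p ≤ k → 2 ≤ q → q ≤ k → p ≠ q →
      skewD c' p q * A p p + skewD c' (p - 1) q * A (p - 1) p
      + (skewD c' q p * A q q + skewD c' (q - 1) p * A (q - 1) q) = 0 := by
    intro p q hp hpk hq hqk hpq
    have h := hident (fun l j => (if l = p ∧ j = q then 1 else 0) +
      (if l = q ∧ j = p then 1 else 0))
    rw [skew_sum k c' (fun i j => ∑ l ∈ Finset.Icc 1 n, A i l *
      ((if l = p ∧ j = q then 1 else 0) + (if l = q ∧ j = p then 1 else 0)))] at h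
    simp only [mul_add, Finset.sum_add_distrib] at h
    rw [prod_unit k n hkn A _ p q hp hpk (by omega) hqk hAzero,
      prod_unit k n hkn A _ q p hq hqk (by omega) hpk hAzero] at h
    rw [← h]
    refine Finset.sum_eq_zero fun i _ => Finset.sum_eq_zero fun j _ => ?_
    simp only [and_comm]
    ring
  have key0 : ∀ p, 2 ≤ p → p ≤ k →
      skewD c' p p * A p p + skewD c' (p - 1) p * A (p - 1) p = 0 := by
    intro p hp hpk
    have h := hident (fun l j => (if l = p ∧ j = p then 1 else 0))
    rw [skew_sum k c' (fun i j => ∑ l ∈ Finset.Icc 1 n, A i l *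
      (if l = p ∧ j = p then 1 else 0))] at h
    rw [prod_unit k n hkn A _ p p hp hpk (by omega) hpk hAzero] at h
    rw [← h]
    refine Finset.sum_eq_zero fun i _ => Finset.sum_eq_zero fun j _ => ?_
    simp only [and_comm]
    ring
  have main : ∀ d i j, j - i = d → 1 ≤ i → i < j → j ≤ k →
      (∀ l, i ≤ l → l < j → eps l = 1) → c' i j = 0 := by
    intro d
    induction d using Nat.strong_induction_on with
    | _ d ih =>
    intro i j hd hi hij hj he
    have hA1 : A i (i + 1) = 1 := by rw [← heps i hi (by omega), he i le_rfl hij]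
    by_cases h1 : j = i + 1
    · subst h1
      have h := key0 (i + 1) (by omega) hj
      simpa [skewD, hA1] using h
    · have hlamc : ∀ m, i + m ≤ j → lam (i + m) = lam i := by
        intro m
        induction m with
        | zero => intro _; rfl
        | succ m ihm =>
          intro hm
          rw [← ihm (by omega), ← add_assoc]
          exact hblock (i + m) (by omega) (by omega) (he _ (by omega) (by omega))
      obtain ⟨m, rfl⟩ : ∃ m, j = i + m + 2 := ⟨j - i - 2, by omega⟩
      have hA2 : A (i + m + 1) (i + m + 2) = 1 := by
        rw [← he (i + m + 1) (by omega) (by omega)]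
        exact (heps (i + m + 1) (by omega) (by omega)).symm
      have hl1 : A (i + 1) (i + 1) = lam i := by
        rw [← hlam _ (by omega) (by omega)]; exact hlamc 1 (by omega)
      have hl2 : A (i + m + 2) (i + m + 2) = lam i := by
        rw [← hlam _ (by omega) (by omega)]; exact hlamc (m + 2) (by omega)
      have h := key (i + 1) (i + m + 2) (by omega) (by omega) (by omega) hj (by omega)
      have e1 : i + 1 - 1 = i := by omega
      have e2 : i + m + 2 - 1 = i + m + 1 := by omega
      rw [e1, e2, hA1, hA2, hl1, hl2] at h
      have s1 : skewD c' (i + 1) (i + m + 2) = c' (i + 1) (i + m + 2) := by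
        unfold skewD; rw [if_pos (by omega), if_neg (by omega)]; ring
      have s2 : skewD c' (i + m + 2) (i + 1) = - c' (i + 1) (i + m + 2) := by
        unfold skewD; rw [if_neg (by omega), if_pos (by omega)]; ring
      have s3 : skewD c' i (i + m + 2) = c' i (i + m + 2) := by
        unfold skewD; rw [if_pos (by omega), if_neg (by omega)]; ring
      have s4 : skewD c' (i + m + 1) (i + 1) = 0 := by
        unfold skewD; rw [if_neg (by omega)]
        split_ifs with hm
        · rw [ih (i + m + 1 - (i + 1)) (by omega) (i + 1) (i + m + 1) rfl (by omega) hm (by omega)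
            (fun l h1 h2 => he l (by omega) (by omega))]
          ring
        · ring
      rw [s1, s2, s3, s4] at h
      linear_combination h
  intro i j
  exact main _ i j rfl
end

section
/- Let F be a field and let k ≤ n be positive integers. Let A be a k×n matrix over F in generalized Jordan normal form, with diagonal entries λ₁, …, λ_k and superdiagonal entries ε₁, …, ε_{k−1} ∈ {0,1} (conventions ε₀ = ε_k = 0). Suppose there exist scalars c_{i,j}, c′_{i,j} ∈ F for 1 ≤ i < j ≤ k such that for every n×k matrix B over F one has Σ_{i<j} c_{i,j}(B_{i,j} − B_{j,i}) = Σ_{i<j} c′_{i,j}((AB)_{i,j} − (AB)_{j,i}). If i < j and c′_{i,j} ≠ 0, then: (a) if ε_i = 1, then ε_{j−1} = 1 and c′_{i+1,j−1} = c′_{i,j}; and (b) if ε_j = 1, then ε_{i−1} = 1 and c′_{i−1,j+1} = c′_{i,j}. -/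
theorem aux_sum {F : Type*} [Field F] (k : ℕ) (G : ℕ → ℕ → F) (hG : ∀ i, G i i = 0) :
    ∑ i ∈ Finset.Icc 1 k, ∑ j ∈ Finset.Icc (i + 1) k, (G i j + G j i)
      = ∑ i ∈ Finset.Icc 1 k, ∑ j ∈ Finset.Icc 1 k, G i j := by
  have h1 : ∀ f : ℕ → ℕ → F, ∑ i ∈ Finset.Icc 1 k, ∑ j ∈ Finset.Icc (i + 1) k, f i j
      = ∑ i ∈ Finset.Icc 1 k, ∑ j ∈ Finset.Icc 1 k, if i < j then f i j else 0 := by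
    intro f
    refine Finset.sum_congr rfl fun i hi => ?_
    rw [← Finset.sum_filter]
    refine Finset.sum_congr ?_ fun _ _ => rfl
    ext j
    simp only [Finset.mem_Icc, Finset.mem_filter] at *
    omega
  simp only [Finset.sum_add_distrib]
  rw [h1 G, h1 fun i j => G j i, Finset.sum_comm (f := fun i j => if i < j then G j i else 0),
    ← Finset.sum_add_distrib]
  refine Finset.sum_congr rfl fun i _ => ?_
  rw [← Finset.sum_add_distrib]
  refine Finset.sum_congr rfl fun j _ => ?_
  rcases lt_trichotomy i j with h | h | h
  · simp [h, h.not_gt]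
  · subst h; simp [hG]
  · simp [h, h.not_gt]

theorem aux_E {F : Type*} [Field F] (k n : ℕ) (hkn : k ≤ n) (A c' : ℕ → ℕ → F)
    (l m : ℕ) (hl : 1 ≤ l) (hlk : l ≤ k) (hm : 1 ≤ m) (hmk : m ≤ k) :
    ∑ a ∈ Finset.Icc 1 k, ∑ b ∈ Finset.Icc 1 k, c' a b *
      (∑ x ∈ Finset.Icc 1 n, A a x * (if x = l ∧ b = m then (1 : F) else 0))
      = ∑ a ∈ Finset.Icc 1 k, c' a m * A a l := by
  refine Finset.sum_congr rfl fun a _ => ?_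
  rw [Finset.sum_eq_single m]
  · congr 1
    rw [Finset.sum_eq_single l]
    · simp
    · intro x _ hx; simp [hx]
    · intro h; exact absurd (Finset.mem_Icc.2 ⟨hl, hlk.trans hkn⟩) h
  · intro b _ hb; simp [hb]
  · intro h; exact absurd (Finset.mem_Icc.2 ⟨hm, hmk⟩) h

/-- (Part (iii) of Lemma `technical-first` of Osserman,
antidiagonal propagation.)  Let `A` be a `k × n` matrix over a field `F`
(indexed by `{1, …, k} × {1, …, n}`) in generalized Jordan normal form, with
diagonal entries `λ₁, …, λ_k` and superdiagonal entries
`ε₁, …, ε_{k-1} ∈ {0, 1}` (conventions `ε₀ = ε_k = 0`).  Suppose scalars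
`c_{i,j}, c'_{i,j}` (`1 ≤ i < j ≤ k`, with `c'` extended by `c'_{a,a} = 0`
and `c'_{b,a} = -c'_{a,b}` for `a < b`) satisfy, for every `n × k` matrix
`B`, `∑_{i<j} c_{i,j}(B_{i,j} - B_{j,i}) = ∑_{i<j} c'_{i,j}((AB)_{i,j} - (AB)_{j,i})`.
If `i < j` and `c'_{i,j} ≠ 0`, then:
(a) if `ε_i = 1`, then `ε_{j-1} = 1` and `c'_{i+1,j-1} = c'_{i,j}`; and
(b) if `ε_j = 1`, then `ε_{i-1} = 1` and `c'_{i-1,j+1} = c'_{i,j}`. -/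
theorem statement12 (F : Type*) [Field F] (k n : ℕ) (hk : 1 ≤ k) (hkn : k ≤ n)
    (A : ℕ → ℕ → F) (lam eps : ℕ → F)
    (hlam : ∀ i, 1 ≤ i → i ≤ k → lam i = A i i)
    (heps : ∀ i, 1 ≤ i → i < k → eps i = A i (i + 1))
    (heps0 : eps 0 = 0) (hepsk : eps k = 0)
    (heps01 : ∀ i, 1 ≤ i → i < k → eps i = 0 ∨ eps i = 1)
    (hAzero : ∀ i j, 1 ≤ i → i ≤ k → 1 ≤ j → j ≤ k → j ≠ i → j ≠ i + 1 →
      A i j = 0)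
    (hblock : ∀ i, 1 ≤ i → i < k → eps i = 1 → lam (i + 1) = lam i)
    (c c' : ℕ → ℕ → F)
    (hc'diag : ∀ a, c' a a = 0)
    (hc'anti : ∀ a b, a < b → c' b a = -c' a b)
    (hident : ∀ B : ℕ → ℕ → F,
      ∑ i ∈ Finset.Icc 1 k, ∑ j ∈ Finset.Icc (i + 1) k,
        c i j * (B i j - B j i)
      = ∑ i ∈ Finset.Icc 1 k, ∑ j ∈ Finset.Icc (i + 1) k,
          c' i j * ((∑ l ∈ Finset.Icc 1 n, A i l * B l j)
            - (∑ l ∈ Finset.Icc 1 n, A j l * B l i))) :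
    ∀ i j, 1 ≤ i → i < j → j ≤ k → c' i j ≠ 0 →
      (eps i = 1 → eps (j - 1) = 1 ∧ c' (i + 1) (j - 1) = c' i j) ∧
      (eps j = 1 → eps (i - 1) = 1 ∧ c' (i - 1) (j + 1) = c' i j) := by
  have hanti : ∀ a b, c' b a = -c' a b := by
    intro a b
    rcases lt_trichotomy a b with h | h | h
    · exact hc'anti a b h
    · subst h; simp [hc'diag]
    · rw [hc'anti b a h]; simp
  have hsym : ∀ B : ℕ → ℕ → F, (∀ i j, B i j = B j i) →
      ∑ a ∈ Finset.Icc 1 k, ∑ b ∈ Finset.Icc 1 k,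
        c' a b * (∑ x ∈ Finset.Icc 1 n, A a x * B x b) = 0 := by
    intro B hB
    have h := hident B
    rw [Finset.sum_eq_zero (fun i _ => Finset.sum_eq_zero fun j _ => by
      rw [hB i j]; simp)] at h
    rw [← aux_sum k (fun a b => c' a b * (∑ x ∈ Finset.Icc 1 n, A a x * B x b))
      (fun i => by simp [hc'diag]), h]
    refine Finset.sum_congr rfl fun i _ => Finset.sum_congr rfl fun j _ => ?_
    rw [hanti i j]; ring
  have hcol : ∀ l m, 1 ≤ l → l ≤ k → ∑ a ∈ Finset.Icc 1 k, c' a m * A a l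
      = lam l * c' l m + eps (l - 1) * c' (l - 1) m := by
    intro l m hl hlk
    rcases Nat.lt_or_ge 1 l with h1 | h1
    · rw [Finset.sum_eq_add_of_mem (l : ℕ) (l - 1) (Finset.mem_Icc.2 ⟨hl, hlk⟩)
        (Finset.mem_Icc.2 (by omega)) (by omega)]
      · rw [hlam l hl hlk, heps (l - 1) (by omega) (by omega), Nat.sub_add_cancel hl]; ring
      · intro a ha hne
        rw [Finset.mem_Icc] at ha
        rw [hAzero a l ha.1 ha.2 hl hlk (by omega) (by omega), mul_zero]
    · have : l = 1 := by omega
      subst this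
      rw [Finset.sum_eq_single_of_mem 1 (Finset.mem_Icc.2 ⟨hl, hlk⟩)]
      · rw [hlam 1 hl hlk]; simp [heps0]; ring
      · intro a ha hne
        rw [Finset.mem_Icc] at ha
        rw [hAzero a 1 ha.1 ha.2 hl hlk (by omega) (by omega), mul_zero]
  have hdiag : ∀ l, 1 ≤ l → l ≤ k → eps (l - 1) * c' (l - 1) l = 0 := by
    intro l hl hlk
    have h := hsym (fun x b => if x = l ∧ b = l then 1 else 0) (by
      intro i j; simp only [and_comm])
    rw [aux_E k n hkn A c' l l hl hlk hl hlk, hcol l l hl hlk, hc'diag] at h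
    simpa using h
  have hstar : ∀ l m, 1 ≤ l → l ≤ k → 1 ≤ m → m ≤ k →
      (lam l - lam m) * c' l m + eps (l - 1) * c' (l - 1) m - eps (m - 1) * c' l (m - 1) = 0 := by
    intro l m hl hlk hm hmk
    have h := hsym (fun x b => (if x = l ∧ b = m then 1 else 0) + (if x = m ∧ b = l then 1 else 0))
      (by intro i j; rw [add_comm]; simp only [and_comm])
    simp only [mul_add, Finset.sum_add_distrib] at h
    rw [aux_E k n hkn A c' l m hl hlk hm hmk, aux_E k n hkn A c' m l hm hmk hl hlk,
      hcol l m hl hlk, hcol m l hm hmk, hanti l m, hanti l (m - 1)] at h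
    linear_combination h
  have hpred : ∀ l, 1 ≤ l → l ≤ k → eps (l - 1) ≠ 0 →
      1 ≤ l - 1 ∧ eps (l - 1) = 1 ∧ lam (l - 1) = lam l := by
    intro l hl hlk h
    have h1 : 1 ≤ l - 1 := by
      by_contra h1
      have : l - 1 = 0 := by omega
      rw [this] at h
      exact h heps0
    have h2 := (heps01 (l - 1) h1 (by omega)).resolve_left h
    have h3 := hblock (l - 1) h1 (by omega) h2
    rw [Nat.sub_add_cancel hl] at h3
    exact ⟨h1, h2, h3.symm⟩
  have hlamne : ∀ s l m, l + m ≤ s → 1 ≤ l → l ≤ k → 1 ≤ m → m ≤ k → lam l ≠ lam m →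
      c' l m = 0 := by
    intro s
    induction s with
    | zero => intro l m h hl; omega
    | succ s ih =>
      intro l m h hl hlk hm hmk hne
      have h0 := hstar l m hl hlk hm hmk
      have e1 : eps (l - 1) * c' (l - 1) m = 0 := by
        by_cases he : eps (l - 1) = 0
        · simp [he]
        · obtain ⟨p, _, q⟩ := hpred l hl hlk he
          rw [ih (l - 1) m (by omega) p (by omega) hm hmk (by rwa [q]), mul_zero]
      have e2 : eps (m - 1) * c' l (m - 1) = 0 := by
        by_cases he : eps (m - 1) = 0
        · simp [he]
        · obtain ⟨p, _, q⟩ := hpred m hm hmk he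
          rw [ih l (m - 1) (by omega) hl hlk p (by omega) (by rwa [q]), mul_zero]
      rw [e1, e2, add_zero, sub_zero] at h0
      exact (mul_eq_zero.1 h0).resolve_left (sub_ne_zero.2 hne)
  intro i j hi hij hjk hne
  have hlij : lam i = lam j := by
    by_contra h
    exact hne (hlamne (i + j) i j le_rfl hi (by omega) (by omega) hjk h)
  constructor
  · intro he
    by_cases hj : j = i + 1
    · subst hj
      have h := hdiag (i + 1) (by omega) hjk
      rw [Nat.add_sub_cancel, he, one_mul] at h
      exact absurd h hne
    have h0 := hstar (i + 1) j (by omega) (by omega) (by omega) hjk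
    rw [hblock i hi (by omega) he, hlij, Nat.add_sub_cancel, he] at h0
    have h1 : c' i j = eps (j - 1) * c' (i + 1) (j - 1) := by linear_combination h0
    have h2 : eps (j - 1) ≠ 0 := by
      intro h; rw [h, zero_mul] at h1; exact hne h1
    obtain ⟨_, h3, _⟩ := hpred j (by omega) hjk h2
    rw [h3, one_mul] at h1
    exact ⟨h3, h1.symm⟩
  · intro he
    have hjk' : j < k := by
      rcases Nat.lt_or_ge j k with h | h
      · exact h
      · have : j = k := by omega
        rw [this, hepsk] at he
        exact absurd he zero_ne_one
    have h0 := hstar i (j + 1) hi (by omega) (by omega) (by omega)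
    rw [hblock j (by omega) hjk' he, hlij, Nat.add_sub_cancel, he] at h0
    have h1 : c' i j = eps (i - 1) * c' (i - 1) (j + 1) := by linear_combination -h0
    have h2 : eps (i - 1) ≠ 0 := by
      intro h; rw [h, zero_mul] at h1; exact hne h1
    obtain ⟨_, h3, _⟩ := hpred i hi (by omega) h2
    rw [h3, one_mul] at h1
    exact ⟨h3, h1.symm⟩
end

section
/- Let F be a field and let k ≤ n be positive integers. Let A be a k×n matrix over F in generalized Jordan normal form, with diagonal entries λ₁, …, λ_k and superdiagonal entries ε₁, …, ε_{k−1} ∈ {0,1} (convention ε₀ = 0). Suppose there exist scalars c_{i,j}, c′_{i,j} ∈ F for 1 ≤ i < j ≤ k such that for every n×k matrix B over F one has Σ_{i<j} c_{i,j}(B_{i,j} − B_{j,i}) = Σ_{i<j} c′_{i,j}((AB)_{i,j} − (AB)_{j,i}). Extend the scalars by the conventions c′_{a,a} = 0 and c′_{b,a} = −c′_{a,b} for a < b. Let i ∈ {1, …, k} be an index such that either ε_{i−1} = 0 or c′_{i−1,j} = 0 for all j ∈ {1, …, k}. Then the row vector v = (c′_{i,1}, …, c′_{i,k}) ∈ F^k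 satisfies v·(A − λ_i·J_{k,n}) = 0 as a row vector in F^n. -/
theorem aux_antisym {F : Type*} [Field F] (k : ℕ) (c G : ℕ → ℕ → F)
    (hd : ∀ a, c a a = 0) (ha : ∀ a b, a < b → c b a = -c a b) :
    ∑ a ∈ Finset.Icc 1 k, ∑ b ∈ Finset.Icc (a + 1) k, c a b * (G a b - G b a)
      = ∑ a ∈ Finset.Icc 1 k, ∑ b ∈ Finset.Icc 1 k, c a b * G a b := by
  have h1 : ∀ a ∈ Finset.Icc 1 k, ∑ b ∈ Finset.Icc (a + 1) k, c a b * (G a b - G b a)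
      = ∑ b ∈ Finset.Icc 1 k, (if a < b then c a b * G a b else 0)
        + ∑ b ∈ Finset.Icc 1 k, (if a < b then c b a * G b a else 0) := by
    intro a _
    have : Finset.Icc (a + 1) k = (Finset.Icc 1 k).filter (fun b => a < b) := by
      ext b
      simp only [Finset.mem_Icc, Finset.mem_filter]
      omega
    rw [this, Finset.sum_filter, ← Finset.sum_add_distrib]
    refine Finset.sum_congr rfl fun b _ => ?_
    split_ifs with h
    · rw [ha a b h]; ring
    · simp
  rw [Finset.sum_congr rfl h1, Finset.sum_add_distrib]
  rw [Finset.sum_comm (f := fun a b => if a < b then c b a * G b a else 0),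
    ← Finset.sum_add_distrib]
  refine Finset.sum_congr rfl fun a _ => ?_
  rw [← Finset.sum_add_distrib]
  refine Finset.sum_congr rfl fun b _ => ?_
  rcases lt_trichotomy a b with h | h | h
  · simp [h, h.not_gt]
  · subst h; simp [hd]
  · simp [h, h.not_gt]

theorem aux_single {F : Type*} [Field F] (k n : ℕ) (A c : ℕ → ℕ → F) (p q : ℕ)
    (hp : p ∈ Finset.Icc 1 n) (hq : q ∈ Finset.Icc 1 k) :
    ∑ a ∈ Finset.Icc 1 k, ∑ b ∈ Finset.Icc 1 k,
      c a b * (∑ l ∈ Finset.Icc 1 n, A a l * (if l = p then (if b = q then 1 else 0) else 0))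
      = ∑ a ∈ Finset.Icc 1 k, c a q * A a p := by
  refine Finset.sum_congr rfl fun a _ => ?_
  rw [Finset.sum_eq_single q]
  · rw [Finset.sum_eq_single p]
    · simp
    · intro l _ h; simp [h]
    · intro h; exact absurd hp h
  · intro b _ h; simp [h]
  · intro h; exact absurd hq h

/-- (The eigenvector construction in the proof of Lemma
`technical-second` of Osserman.)  Let `A` be a `k × n` matrix over a field
`F` (indexed by `{1, …, k} × {1, …, n}`) in generalized Jordan normal form,
with diagonal entries `λ₁, …, λ_k` and superdiagonal entries
`ε₁, …, ε_{k-1} ∈ {0, 1}` (convention `ε₀ = 0`).  Suppose scalars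
`c_{i,j}, c'_{i,j}` (`1 ≤ i < j ≤ k`, with `c'` extended by `c'_{a,a} = 0`
and `c'_{b,a} = -c'_{a,b}` for `a < b`) satisfy, for every `n × k` matrix
`B`, `∑_{i<j} c_{i,j}(B_{i,j} - B_{j,i}) = ∑_{i<j} c'_{i,j}((AB)_{i,j} - (AB)_{j,i})`.
Let `i ∈ {1, …, k}` be such that either `ε_{i-1} = 0` or `c'_{i-1,j} = 0`
for all `j ∈ {1, …, k}`.  Then the row vector `v = (c'_{i,1}, …, c'_{i,k})`
satisfies `v ⬝ (A - λ_i J_{k,n}) = 0`. -/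
theorem statement14 (F : Type*) [Field F] (k n : ℕ) (hk : 1 ≤ k) (hkn : k ≤ n)
    (A : ℕ → ℕ → F) (lam eps : ℕ → F)
    (hlam : ∀ i, 1 ≤ i → i ≤ k → lam i = A i i)
    (heps : ∀ i, 1 ≤ i → i < k → eps i = A i (i + 1))
    (heps0 : eps 0 = 0)
    (heps01 : ∀ i, 1 ≤ i → i < k → eps i = 0 ∨ eps i = 1)
    (hAzero : ∀ i j, 1 ≤ i → i ≤ k → 1 ≤ j → j ≤ k → j ≠ i → j ≠ i + 1 →
      A i j = 0)
    (hblock : ∀ i, 1 ≤ i → i < k → eps i = 1 → lam (i + 1) = lam i)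
    (c c' : ℕ → ℕ → F)
    (hc'diag : ∀ a, c' a a = 0)
    (hc'anti : ∀ a b, a < b → c' b a = -c' a b)
    (hident : ∀ B : ℕ → ℕ → F,
      ∑ i ∈ Finset.Icc 1 k, ∑ j ∈ Finset.Icc (i + 1) k,
        c i j * (B i j - B j i)
      = ∑ i ∈ Finset.Icc 1 k, ∑ j ∈ Finset.Icc (i + 1) k,
          c' i j * ((∑ l ∈ Finset.Icc 1 n, A i l * B l j)
            - (∑ l ∈ Finset.Icc 1 n, A j l * B l i)))
    (i : ℕ) (hi1 : 1 ≤ i) (hik : i ≤ k)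
    (hmin : eps (i - 1) = 0 ∨ ∀ j, 1 ≤ j → j ≤ k → c' (i - 1) j = 0) :
    ∀ j, 1 ≤ j → j ≤ n →
      ∑ l ∈ Finset.Icc 1 k,
        c' i l * (A l j - if l = j then lam i else 0) = 0 := by
  intro j hj1 hjn
  have hneg : ∀ a b, c' b a = -c' a b := by
    intro a b
    rcases lt_trichotomy a b with h | h | h
    · exact hc'anti a b h
    · subst h; simp [hc'diag]
    · rw [hc'anti b a h]; simp
  have hid : ∀ B : ℕ → ℕ → F, (∀ a b, 1 ≤ a → a < b → b ≤ k → B a b = B b a) →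
      ∑ a ∈ Finset.Icc 1 k, ∑ b ∈ Finset.Icc 1 k,
        c' a b * (∑ l ∈ Finset.Icc 1 n, A a l * B l b) = 0 := by
    intro B hB
    rw [← aux_antisym k c' (fun a b => ∑ l ∈ Finset.Icc 1 n, A a l * B l b) hc'diag hc'anti,
      ← hident B]
    refine Finset.sum_eq_zero fun a ha => Finset.sum_eq_zero fun b hb => ?_
    rw [Finset.mem_Icc] at ha hb
    rw [hB a b ha.1 (by omega) hb.2]; simp
  have hiK : i ∈ Finset.Icc 1 k := Finset.mem_Icc.2 ⟨hi1, hik⟩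
  have hiN : i ∈ Finset.Icc 1 n := Finset.mem_Icc.2 ⟨hi1, hik.trans hkn⟩
  have hjN : j ∈ Finset.Icc 1 n := Finset.mem_Icc.2 ⟨hj1, hjn⟩
  have hM : ∑ l ∈ Finset.Icc 1 k, c' i l * A l j = - ∑ l ∈ Finset.Icc 1 k, c' l i * A l j := by
    rw [← Finset.sum_neg_distrib]
    refine Finset.sum_congr rfl fun l _ => ?_
    rw [hneg l i]; ring
  simp only [mul_sub, Finset.sum_sub_distrib, mul_ite, mul_zero]
  rw [Finset.sum_ite_eq', hM]
  by_cases hjk : j ≤ k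
  · have hjK : j ∈ Finset.Icc 1 k := Finset.mem_Icc.2 ⟨hj1, hjk⟩
    have hS : ∑ l ∈ Finset.Icc 1 k, c' l j * A l i = c' i j * lam i := by
      rw [Finset.sum_eq_single i]
      · rw [hlam i hi1 hik]
      · intro l hl hli
        rw [Finset.mem_Icc] at hl
        by_cases h : i = l + 1
        · subst h
          rw [← heps l hl.1 (by omega)]
          rcases hmin with h | h
          · simp only [Nat.add_sub_cancel] at h; rw [h, mul_zero]
          · have := h j hj1 hjk
            simp only [Nat.add_sub_cancel] at this; rw [this, zero_mul]
        · rw [hAzero l i hl.1 hl.2 hi1 hik (Ne.symm hli) h, mul_zero]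
      · intro h; exact absurd hiK h
    rw [if_pos hjK]
    by_cases hij : j = i
    · subst hij
      rw [hS, hc'diag]; simp
    · have h := hid (fun l b => (if l = i then (if b = j then 1 else 0) else 0)
        + (if l = j then (if b = i then 1 else 0) else 0)) (by
          intro a b _ _ _
          by_cases h1 : a = i <;> by_cases h2 : b = j <;> by_cases h3 : a = j <;>
            by_cases h4 : b = i <;> simp [h1, h2, h3, h4] <;> grind)
      simp only [mul_add, Finset.sum_add_distrib] at h
      rw [aux_single k n A c' i j hiN hjK, aux_single k n A c' j i hjN hiK, hS] at h
      linear_combination -h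
  · rw [if_neg (by simp [hjk])]
    have h := hid (fun l b => if l = j then (if b = i then 1 else 0) else 0) (by
      intro a b _ _ _
      rw [if_neg (by omega), if_neg (by omega)])
    rw [aux_single k n A c' j i hjN hiK] at h
    rw [h]; simp
end
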